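/- arXiv:2210.01284 — 4 statements merged into one kernel-verified Lean document; each statement's English description precedes it below -/
import Mathlib

section
/- In the bivariate skew normal setting, suppose B(u) → -∞ as u → 0⁺. Then β₁ > 0 and P₁(u) ~ e^{-A₁(u)²/(2(1-ρ²)) - B(u)²/2} / (2π·√(1-ρ²)·β₁·|Q₂(u)|·Φ(λ₂·Q₂(u))·|B(u)|) as u → 0⁺, where f ~ g means f/g → 1. -/
/-!
Write `φ`, `Φ` for the standard normal density and distribution function, `q = |Q₂(u)|` and
`v = 1 - ρ²`. With `z = Q₁ - t / q`, the exponential factor in `P₁` becomes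
`exp(-A₁² / (2v)) * exp(A₁ t / (q v) - t² / (2 v q²))` and the argument of `Φ` becomes
`B - α₁ t / q`. Dividing out the value at the boundary `t = 0`, the quotient in the theorem equals
`β₁ * (|B| Φ(B) / φ(B)) * ∫₀^∞ exp(A₁ t / (q v) - t² / (2 v q²)) Φ(B - α₁ t / q) / Φ(B) dt`.

The middle factor tends to `1` by Mills' ratio (`tendsto_mills`). The integral tends to
`∫₀^∞ exp(-β₁ t) dt = 1 / β₁` by dominated convergence (`tendsto_laplace`): the pointwise limit is
Mills' ratio once more, and a dominating function, for either sign of `α₁`, comes from the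
log-concavity of `Φ`, the tangent line of `log Φ` at `B` having slope `φ(B) / Φ(B) ~ |B|`
(`stdNormalCDF_add_le`).

The limits of `A₁ / q` and `B / q` follow from `Q₁ / Q₂ → γ₁`. This in turn holds because
`log F_l(x) ~ -(1 + max(l, 0)²) x² / 2` at `-∞` (`tendsto_log_snCDF_div_sq`) while
`log F₁(Q₁) = log u = log F₂(Q₂)`.

Finally `B → -∞` forces `α₁ γ₁ + α₂ ≥ 0`, and under this constraint `β₁ > 0` (`beta_pos`) is a
computation with the quadratic form `(x² - 2ρxy + y²) / v + (α₁ x + α₂ y)²`, whose half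
`x`-derivative at `(γ₁, 1)` is `β₁`: its determinant `N / v`,
`N = 1 + α₁² + α₂² + 2ρα₁α₂`, is positive.
-/

open Real Filter Topology MeasureTheory

/-- The standard normal cumulative distribution function. -/
noncomputable def stdNormalCDF (x : ℝ) : ℝ :=
  ∫ t in Set.Iic x, (Real.sqrt (2 * Real.pi))⁻¹ * Real.exp (-(t ^ 2) / 2)

/-- The cdf of the skew normal distribution `SN(l)`. -/
noncomputable def snCDF (l : ℝ) (x : ℝ) : ℝ :=
  ∫ t in Set.Iic x,
    2 * ((Real.sqrt (2 * Real.pi))⁻¹ * Real.exp (-(t ^ 2) / 2)) * stdNormalCDF (l * t)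

/-! ### The standard normal distribution -/

/-- The standard normal density. -/
noncomputable def stdNormalPDF (x : ℝ) : ℝ := (√(2 * π))⁻¹ * exp (-(x ^ 2) / 2)

lemma stdNormalPDF_pos (x : ℝ) : 0 < stdNormalPDF x := by
  unfold stdNormalPDF; positivity

lemma continuous_stdNormalPDF : Continuous stdNormalPDF := by
  unfold stdNormalPDF; fun_prop

lemma hasDerivAt_stdNormalPDF (x : ℝ) :
    HasDerivAt stdNormalPDF (-x * stdNormalPDF x) x := by
  have h : HasDerivAt (fun x : ℝ => -(x ^ 2) / 2) (-x) x := by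
    have := ((hasDerivAt_pow 2 x).neg).div_const 2
    refine this.congr_deriv ?_
    push_cast
    ring
  have := (h.exp).const_mul (√(2 * π))⁻¹
  unfold stdNormalPDF
  refine this.congr_deriv ?_
  ring

lemma stdNormalPDF_eq_gaussianPDFReal :
    stdNormalPDF = ProbabilityTheory.gaussianPDFReal 0 1 := by
  funext x
  simp [stdNormalPDF, ProbabilityTheory.gaussianPDFReal]

lemma integrable_stdNormalPDF : Integrable stdNormalPDF := by
  rw [stdNormalPDF_eq_gaussianPDFReal]
  exact ProbabilityTheory.integrable_gaussianPDFReal 0 1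

lemma integral_stdNormalPDF : ∫ x, stdNormalPDF x = 1 := by
  rw [stdNormalPDF_eq_gaussianPDFReal]
  exact ProbabilityTheory.integral_gaussianPDFReal_eq_one 0 one_ne_zero

lemma stdNormalCDF_eq (x : ℝ) : stdNormalCDF x = ∫ t in Set.Iic x, stdNormalPDF t := rfl

lemma stdNormalPDF_anti {x y : ℝ} (hxy : x ≤ y) (hy : y ≤ 0) :
    stdNormalPDF x ≤ stdNormalPDF y := by
  unfold stdNormalPDF
  gcongr 2
  have : y ^ 2 ≤ x ^ 2 := by nlinarith
  linarith

lemma hasDerivAt_stdNormalCDF (x : ℝ) : HasDerivAt stdNormalCDF (stdNormalPDF x) x := by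
  have h : stdNormalCDF = fun y => stdNormalCDF 0 + ∫ t in (0 : ℝ)..y, stdNormalPDF t := by
    funext y
    rw [stdNormalCDF_eq, stdNormalCDF_eq, ← intervalIntegral.integral_Iic_sub_Iic
      integrable_stdNormalPDF.integrableOn integrable_stdNormalPDF.integrableOn]
    ring
  rw [h]
  exact (intervalIntegral.integral_hasDerivAt_right
    (continuous_stdNormalPDF.intervalIntegrable _ _)
    continuous_stdNormalPDF.stronglyMeasurable.stronglyMeasurableAtFilter
    continuous_stdNormalPDF.continuousAt).const_add _

lemma continuous_stdNormalCDF : Continuous stdNormalCDF :=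
  continuous_iff_continuousAt.2 fun x => (hasDerivAt_stdNormalCDF x).continuousAt

lemma stdNormalCDF_mono : Monotone stdNormalCDF :=
  monotone_of_hasDerivAt_nonneg hasDerivAt_stdNormalCDF fun x => (stdNormalPDF_pos x).le

lemma stdNormalCDF_le_one (x : ℝ) : stdNormalCDF x ≤ 1 := by
  rw [← integral_stdNormalPDF, stdNormalCDF_eq]
  exact setIntegral_le_integral integrable_stdNormalPDF
    (Eventually.of_forall fun x => (stdNormalPDF_pos x).le)

/-- For a nonnegative integrable function, the mass of `(-∞, x]` dominates any lower bound of the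
function on `[x - 1, x]`. -/
lemma le_integral_Iic {f : ℝ → ℝ} (hf : Integrable f) (h0 : ∀ x, 0 ≤ f x) {x c : ℝ}
    (hc : ∀ t ∈ Set.Icc (x - 1) x, c ≤ f t) : c ≤ ∫ t in Set.Iic x, f t := by
  calc c = ∫ _ in Set.Icc (x - 1) x, c := by simp
    _ ≤ ∫ t in Set.Icc (x - 1) x, f t :=
      setIntegral_mono_on (by simp) hf.integrableOn measurableSet_Icc hc
    _ ≤ ∫ t in Set.Iic x, f t :=
      setIntegral_mono_set hf.integrableOn (Eventually.of_forall h0)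
        (Set.Icc_subset_Iic_self.eventuallyLE)

lemma stdNormalPDF_sub_one_le_stdNormalCDF {x : ℝ} (hx : x ≤ 0) :
    stdNormalPDF (x - 1) ≤ stdNormalCDF x :=
  le_integral_Iic integrable_stdNormalPDF (fun x => (stdNormalPDF_pos x).le)
    fun _ ht => stdNormalPDF_anti ht.1 (ht.2.trans hx)

lemma stdNormalCDF_pos (x : ℝ) : 0 < stdNormalCDF x :=
  (stdNormalPDF_pos _).trans_le ((stdNormalPDF_sub_one_le_stdNormalCDF (min_le_right x 0)).trans
    (stdNormalCDF_mono (min_le_left x 0)))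

lemma tendsto_stdNormalCDF_atBot : Tendsto stdNormalCDF atBot (𝓝 0) := by
  have := tendsto_setIntegral_of_antitone (μ := volume) (f := stdNormalPDF)
    (s := fun n : ℝ => Set.Iic (-n)) (fun _ => measurableSet_Iic)
    (fun a b h => Set.Iic_subset_Iic.2 (neg_le_neg h)) ⟨0, integrable_stdNormalPDF.integrableOn⟩
  have h0 : (⋂ n : ℝ, Set.Iic (-n)) = (∅ : Set ℝ) := by
    ext x
    simp only [Set.mem_iInter, Set.mem_Iic, Set.mem_empty_iff_false, iff_false, not_forall, not_le]
    exact ⟨-x + 1, by linarith⟩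
  rw [h0, setIntegral_empty] at this
  have h2 := this.comp tendsto_neg_atBot_atTop
  refine h2.congr fun x => ?_
  simp [stdNormalCDF_eq]

lemma tendsto_stdNormalPDF_atBot : Tendsto stdNormalPDF atBot (𝓝 0) := by
  have h : Tendsto (fun x : ℝ => stdNormalCDF (x + 1)) atBot (𝓝 0) :=
    tendsto_stdNormalCDF_atBot.comp (tendsto_atBot_add_const_right _ 1 tendsto_id)
  refine squeeze_zero' (Eventually.of_forall fun x => (stdNormalPDF_pos x).le) ?_ h
  filter_upwards [eventually_le_atBot (-1)] with x hx
  have := stdNormalPDF_sub_one_le_stdNormalCDF (x := x + 1) (by linarith)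
  simpa using this

lemma nonneg_of_deriv_nonneg_of_tendsto {g g' : ℝ → ℝ}
    (hg : ∀ x < 0, HasDerivAt g (g' x) x) (hg' : ∀ x < 0, 0 ≤ g' x)
    (hlim : Tendsto g atBot (𝓝 0)) {x : ℝ} (hx : x < 0) : 0 ≤ g x := by
  have hmono : MonotoneOn g (Set.Iio 0) := by
    apply monotoneOn_of_deriv_nonneg (convex_Iio 0)
      (fun y hy => (hg y hy).continuousAt.continuousWithinAt)
    · rw [interior_Iio]
      exact fun y hy => (hg y hy).differentiableAt.differentiableWithinAt
    · rw [interior_Iio]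
      exact fun y hy => by rw [(hg y hy).deriv]; exact hg' y hy
  refine le_of_tendsto hlim ?_
  filter_upwards [eventually_le_atBot x] with y hy
  exact hmono (lt_of_le_of_lt hy hx) hx hy

/-- Upper Mills ratio bound: `|x| Φ(x) ≤ φ(x)`. -/
lemma neg_mul_stdNormalCDF_le (x : ℝ) : -x * stdNormalCDF x ≤ stdNormalPDF x := by
  rcases le_or_gt 0 x with hx | hx
  · have := mul_nonneg hx (stdNormalCDF_pos x).le
    linarith [stdNormalPDF_pos x]
  have key := nonneg_of_deriv_nonneg_of_tendsto
    (g := fun x => stdNormalPDF x / (-x) - stdNormalCDF x)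
    (g' := fun x => stdNormalPDF x / x ^ 2) ?_ ?_ ?_ hx
  · have h2 : stdNormalCDF x ≤ stdNormalPDF x / (-x) := by linarith
    rw [le_div_iff₀ (by linarith)] at h2
    linarith
  · intro y hy
    have := ((hasDerivAt_stdNormalPDF y).div (hasDerivAt_neg y) (by linarith)).sub
      (hasDerivAt_stdNormalCDF y)
    refine this.congr_deriv ?_
    have : y ≠ 0 := hy.ne
    field_simp
    ring
  · intro y _
    have := stdNormalPDF_pos y
    positivity
  · have h := (tendsto_stdNormalPDF_atBot.div_atTop tendsto_neg_atBot_atTop).sub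
      tendsto_stdNormalCDF_atBot
    simpa using h

/-- Lower Mills ratio bound: `φ(x) ≤ (|x| + 1/|x|) Φ(x)` for `x < 0`. -/
lemma stdNormalPDF_le_mul_stdNormalCDF {x : ℝ} (hx : x < 0) :
    stdNormalPDF x ≤ (-x + 1 / (-x)) * stdNormalCDF x := by
  have key := nonneg_of_deriv_nonneg_of_tendsto
    (g := fun x => stdNormalCDF x - stdNormalPDF x * (-x / (1 + x ^ 2)))
    (g' := fun x => stdNormalPDF x * (2 / (1 + x ^ 2) ^ 2)) ?_ ?_ ?_ hx
  · have h2 : stdNormalPDF x * (-x / (1 + x ^ 2)) ≤ stdNormalCDF x := by linarith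
    have hx0 : x ≠ 0 := hx.ne
    have h3 : 0 ≤ -x + 1 / (-x) := by
      have : 0 < -x := by linarith
      positivity
    calc stdNormalPDF x = (-x + 1 / (-x)) * (stdNormalPDF x * (-x / (1 + x ^ 2))) := by
          field_simp; ring
      _ ≤ _ := by gcongr
  · intro y hy
    have hd : HasDerivAt (fun x : ℝ => -x / (1 + x ^ 2))
        ((-1 * (1 + y ^ 2) - (-y) * (2 * y)) / (1 + y ^ 2) ^ 2) y := by
      refine (hasDerivAt_neg y).div ?_ (by positivity)
      simpa using (hasDerivAt_pow 2 y).const_add 1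
    have := (hasDerivAt_stdNormalCDF y).sub ((hasDerivAt_stdNormalPDF y).mul hd)
    refine this.congr_deriv ?_
    have : 1 + y ^ 2 ≠ 0 := by positivity
    field_simp
    ring
  · intro y _
    have := stdNormalPDF_pos y
    positivity
  · have hb : Tendsto (fun x : ℝ => stdNormalPDF x * (-x / (1 + x ^ 2))) atBot (𝓝 0) := by
      refine squeeze_zero_norm' ?_ tendsto_stdNormalPDF_atBot
      filter_upwards [eventually_le_atBot (0 : ℝ)] with y hy
      have hy' : 0 ≤ -y := by linarith
      have hp := stdNormalPDF_pos y
      rw [Real.norm_of_nonneg (by positivity)]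
      refine mul_le_of_le_one_right hp.le ?_
      rw [div_le_one (by positivity)]
      nlinarith [sq_nonneg (y + 1)]
    simpa using tendsto_stdNormalCDF_atBot.sub hb

lemma tendsto_sq_atBot : Tendsto (fun x : ℝ => x ^ 2) atBot atTop := by
  simpa [Function.comp_def] using
    (tendsto_pow_atTop (α := ℝ) two_ne_zero).comp tendsto_neg_atBot_atTop

/-- Mills' asymptotics `Φ(x) ~ φ(x) / |x|` at `-∞`. -/
lemma tendsto_mills :
    Tendsto (fun x => -x * stdNormalCDF x / stdNormalPDF x) atBot (𝓝 1) := by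
  have hlow : Tendsto (fun x : ℝ => 1 - 1 / (1 + x ^ 2)) atBot (𝓝 1) := by
    have : Tendsto (fun x : ℝ => 1 + x ^ 2) atBot atTop :=
      tendsto_atTop_add_const_left _ _ tendsto_sq_atBot
    have h := (tendsto_const_nhds (x := (1 : ℝ))).div_atTop this
    simpa using h.const_sub 1
  refine tendsto_of_tendsto_of_tendsto_of_le_of_le' hlow tendsto_const_nhds ?_ ?_
  · filter_upwards [eventually_lt_atBot (0 : ℝ)] with x hx
    rw [le_div_iff₀ (stdNormalPDF_pos x)]
    have h := stdNormalPDF_le_mul_stdNormalCDF hx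
    have hx0 : x ≠ 0 := hx.ne
    have h3 : 0 ≤ 1 - 1 / (1 + x ^ 2) := by
      rw [sub_nonneg, div_le_one (by positivity)]; nlinarith [sq_nonneg x]
    calc _ ≤ (1 - 1 / (1 + x ^ 2)) * ((-x + 1 / (-x)) * stdNormalCDF x) := by gcongr
      _ = _ := by field_simp; ring
  · filter_upwards with x
    rw [div_le_one (stdNormalPDF_pos x)]
    exact neg_mul_stdNormalCDF_le x

/-- Tangent line bound for the log-concave function `Φ`. -/
lemma stdNormalCDF_add_le (x e : ℝ) :
    stdNormalCDF (x + e) ≤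
      stdNormalCDF x * exp (e * (stdNormalPDF x / stdNormalCDF x)) := by
  have hd : ∀ y, HasDerivAt (fun y => log (stdNormalCDF y))
      (stdNormalPDF y / stdNormalCDF y) y := fun y =>
    (hasDerivAt_stdNormalCDF y).log (stdNormalCDF_pos y).ne'
  have hanti : Antitone (fun y => stdNormalPDF y / stdNormalCDF y) := by
    refine antitone_of_hasDerivAt_nonpos (fun y => (hasDerivAt_stdNormalPDF y).div
      (hasDerivAt_stdNormalCDF y) (stdNormalCDF_pos y).ne') fun y => ?_
    refine div_nonpos_of_nonpos_of_nonneg ?_ (sq_nonneg _)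
    have h1 := neg_mul_stdNormalCDF_le y
    have h2 := stdNormalPDF_pos y
    nlinarith
  have hderiv : deriv (fun y => log (stdNormalCDF y)) =
      fun y => stdNormalPDF y / stdNormalCDF y := funext fun y => (hd y).deriv
  have hconc : ConcaveOn ℝ Set.univ (fun y => log (stdNormalCDF y)) :=
    Antitone.concaveOn_univ_of_deriv (fun y => (hd y).differentiableAt) (by rwa [hderiv])
  have key : log (stdNormalCDF (x + e)) ≤
      log (stdNormalCDF x) + e * (stdNormalPDF x / stdNormalCDF x) := by
    rcases lt_trichotomy e 0 with he | he | he
    · have := hconc.le_slope_of_hasDerivAt (Set.mem_univ (x + e)) (Set.mem_univ x)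
        (by linarith) (hd x)
      rw [slope_def_field, le_div_iff₀ (by linarith)] at this
      linarith
    · simp [he]
    · have := hconc.slope_le_of_hasDerivAt (Set.mem_univ x) (Set.mem_univ (x + e))
        (by linarith) (hd x)
      rw [slope_def_field, div_le_iff₀ (by linarith)] at this
      linarith
  calc stdNormalCDF (x + e) = exp (log (stdNormalCDF (x + e))) :=
        (exp_log (stdNormalCDF_pos _)).symm
    _ ≤ exp (log (stdNormalCDF x) + e * (stdNormalPDF x / stdNormalCDF x)) := exp_le_exp.2 key
    _ = _ := by rw [exp_add, exp_log (stdNormalCDF_pos _)]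

/-! ### The Laplace-type integral -/

lemma tendsto_stdNormalCDF_add_div {ι : Type*} {F : Filter ι} {x e : ι → ℝ} {c : ℝ}
    (hx : Tendsto x F atBot) (he : Tendsto e F (𝓝 0))
    (hxe : Tendsto (fun i => x i * e i) F (𝓝 c)) :
    Tendsto (fun i => stdNormalCDF (x i + e i) / stdNormalCDF (x i)) F (𝓝 (exp (-c))) := by
  have hxa : Tendsto (fun i => x i + e i) F atBot := hx.atBot_add he
  have h1 := (tendsto_mills.comp hxa).div (tendsto_mills.comp hx) one_ne_zero
  have h2 : Tendsto (fun i => exp (-(x i * e i) - e i ^ 2 / 2)) F (𝓝 (exp (-c))) := by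
    have := (hxe.neg.sub ((he.pow 2).div_const 2)).rexp
    simpa using this
  have h3 : Tendsto (fun i => 1 + e i / x i) F (𝓝 1) := by
    simpa using (he.div_atBot hx).const_add 1
  have h4 := (h1.mul h2).div h3 one_ne_zero
  simp only [div_one, one_mul] at h4
  refine h4.congr' ?_
  filter_upwards [hx.eventually_lt_atBot 0, hxa.eventually_lt_atBot 0] with i hi hi'
  have hφ : stdNormalPDF (x i + e i) =
      stdNormalPDF (x i) * exp (-(x i * e i) - e i ^ 2 / 2) := by
    unfold stdNormalPDF
    rw [mul_assoc, ← exp_add]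
    ring_nf
  have p1 := (stdNormalPDF_pos (x i)).ne'
  have p2 := (stdNormalCDF_pos (x i)).ne'
  have p3 : 1 + e i / x i = (x i + e i) / x i := by field_simp [hi.ne]
  have p4 := hi.ne
  have p5 := hi'.ne
  have p6 := (exp_pos (-(x i * e i) - e i ^ 2 / 2)).ne'
  simp only [Function.comp_apply, Pi.div_apply]
  rw [p3, hφ]
  field_simp

/-- The Laplace-type limit behind the theorem. Here `t / q` is the distance to the boundary
point `Q₁`, and `Φ(B)` and the Gaussian factor at the boundary have been divided out. -/
lemma tendsto_laplace {ι : Type*} {F : Filter ι} [F.IsCountablyGenerated] {q A B : ι → ℝ}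
    {v a b α β : ℝ} (hv : 0 < v) (hβ : 0 < β) (hβe : β = -(a / v) + α * b)
    (hq : Tendsto q F atTop) (hA : Tendsto (fun i => A i / q i) F (𝓝 a))
    (hB : Tendsto B F atBot) (hBq : Tendsto (fun i => -B i / q i) F (𝓝 b)) :
    Tendsto (fun i => ∫ t in Set.Ioi (0 : ℝ),
      exp (A i * (t / q i) / v - (t / q i) ^ 2 / (2 * v)) *
        (stdNormalCDF (B i - α * (t / q i)) / stdNormalCDF (B i))) F (𝓝 (1 / β)) := by
  have hint : ∫ t in Set.Ioi (0 : ℝ), exp (-β * t) = 1 / β := by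
    rw [integral_exp_mul_Ioi (by linarith) 0]
    simp
  rw [← hint]
  -- The coefficient of `t` in the tangent-line bound for the integrand tends to `-β`.
  have hK : Tendsto (fun i => A i / q i / v -
      α * (stdNormalPDF (B i) / stdNormalCDF (B i) / q i)) F (𝓝 (-β)) := by
    have h1 := ((tendsto_mills.comp hB).inv₀ one_ne_zero).mul hBq
    have h2 : Tendsto (fun i => stdNormalPDF (B i) / stdNormalCDF (B i) / q i) F (𝓝 b) := by
      rw [inv_one, one_mul] at h1
      refine h1.congr' ?_
      filter_upwards [hB.eventually_lt_atBot 0] with i hi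
      have := hi.ne
      have p2 := (stdNormalCDF_pos (B i)).ne'
      simp only [Function.comp_apply]
      field_simp
    have h3 := (hA.div_const v).sub (h2.const_mul α)
    rwa [show a / v - α * b = -β by rw [hβe]; ring] at h3
  refine tendsto_integral_filter_of_dominated_convergence (fun t => exp (-(β / 2) * t)) ?_ ?_ ?_ ?_
  · refine Eventually.of_forall fun i => Continuous.aestronglyMeasurable ?_
    have := continuous_stdNormalCDF
    fun_prop
  · filter_upwards [hK.eventually_lt_const (show -β < -(β / 2) by linarith),
      hq.eventually_gt_atTop 0] with i hi hqi
    refine (ae_restrict_iff' measurableSet_Ioi).2 (Eventually.of_forall fun t ht => ?_)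
    have ht : 0 < t := ht
    have hP := stdNormalCDF_pos (B i)
    have hP' := stdNormalCDF_pos (B i - α * (t / q i))
    rw [Real.norm_of_nonneg (by positivity)]
    have h1 := stdNormalCDF_add_le (B i) (-(α * (t / q i)))
    rw [← sub_eq_add_neg, mul_comm (stdNormalCDF (B i)), ← div_le_iff₀ hP] at h1
    calc _ ≤ exp (A i * (t / q i) / v - (t / q i) ^ 2 / (2 * v)) *
          exp (-(α * (t / q i)) * (stdNormalPDF (B i) / stdNormalCDF (B i))) := by gcongr
      _ = exp (A i * (t / q i) / v - (t / q i) ^ 2 / (2 * v) +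
          -(α * (t / q i)) * (stdNormalPDF (B i) / stdNormalCDF (B i))) := (exp_add _ _).symm
      _ ≤ exp ((A i / q i / v - α * (stdNormalPDF (B i) / stdNormalCDF (B i) / q i)) * t) := by
        rw [exp_le_exp]
        have h2 : 0 ≤ (t / q i) ^ 2 / (2 * v) := by positivity
        have h3 : (A i / q i / v - α * (stdNormalPDF (B i) / stdNormalCDF (B i) / q i)) * t =
          A i * (t / q i) / v +
          -(α * (t / q i)) * (stdNormalPDF (B i) / stdNormalCDF (B i)) := by
            field_simp
            ring
        linarith
      _ ≤ _ := by
        rw [exp_le_exp]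
        exact mul_le_mul_of_nonneg_right hi.le ht.le
  · exact exp_neg_integrableOn_Ioi 0 (by positivity)
  · refine Eventually.of_forall fun t => ?_
    have htq : Tendsto (fun i => t / q i) F (𝓝 0) := tendsto_const_nhds.div_atTop hq
    have h1 : Tendsto (fun i => exp (A i * (t / q i) / v - (t / q i) ^ 2 / (2 * v))) F
        (𝓝 (exp (a * t / v))) := by
      have := (((hA.mul_const t).div_const v).sub ((htq.pow 2).div_const (2 * v))).rexp
      simp only [ne_eq, OfNat.ofNat_ne_zero, not_false_eq_true, zero_pow, zero_div,
        sub_zero] at this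
      refine this.congr fun i => ?_
      congr 3
      ring
    have h2 := tendsto_stdNormalCDF_add_div (F := F) (x := B) (e := fun i => -(α * (t / q i)))
      (c := α * t * b) hB (by simpa using (htq.const_mul α).neg)
      ((hBq.const_mul (α * t)).congr fun i => by ring)
    have h3 := h1.mul h2
    rw [← exp_add, show a * t / v + -(α * t * b) = -β * t by rw [hβe]; ring] at h3
    simpa only [← sub_eq_add_neg] using h3

/-! ### Skew normal tails and quantiles -/

lemma stdNormalCDF_le_two_mul_exp {y : ℝ} (hy : y ≤ 0) :
    stdNormalCDF y ≤ 2 * exp (-(y ^ 2) / 2) := by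
  rcases le_or_gt y (-1) with h | h
  · have h1 := neg_mul_stdNormalCDF_le y
    have h2 := stdNormalCDF_pos y
    have h3 : stdNormalPDF y ≤ exp (-(y ^ 2) / 2) := by
      refine mul_le_of_le_one_left (exp_pos _).le (inv_le_one_of_one_le₀ ?_)
      rw [Real.one_le_sqrt]; nlinarith [Real.pi_gt_three]
    nlinarith [exp_pos (-(y ^ 2) / 2)]
  · have h1 := stdNormalCDF_le_one y
    have h2 := add_one_le_exp (-(y ^ 2) / 2)
    nlinarith

lemma integrable_snPDF (l : ℝ) :
    Integrable fun t => 2 * stdNormalPDF t * stdNormalCDF (l * t) := by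
  refine (integrable_stdNormalPDF.const_mul 2).mono' ?_ (Eventually.of_forall fun t => ?_)
  · have := continuous_stdNormalCDF
    have := continuous_stdNormalPDF
    exact Continuous.aestronglyMeasurable (by fun_prop)
  · have h1 := stdNormalPDF_pos t
    have h2 := stdNormalCDF_pos (l * t)
    rw [Real.norm_of_nonneg (by positivity)]
    exact mul_le_of_le_one_right (by positivity) (stdNormalCDF_le_one _)

lemma snPDF_nonneg (l t : ℝ) : 0 ≤ 2 * stdNormalPDF t * stdNormalCDF (l * t) := by
  have h1 := stdNormalPDF_pos t
  have h2 := stdNormalCDF_pos (l * t)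
  positivity

lemma snCDF_eq (l x : ℝ) :
    snCDF l x = ∫ t in Set.Iic x, 2 * stdNormalPDF t * stdNormalCDF (l * t) := rfl

lemma snCDF_mono (l : ℝ) : Monotone (snCDF l) := fun _ _ hxy =>
  setIntegral_mono_set (integrable_snPDF l).integrableOn (Eventually.of_forall (snPDF_nonneg l))
    (Set.Iic_subset_Iic.2 hxy).eventuallyLE

lemma le_snCDF (l : ℝ) {x : ℝ} (hx : x ≤ 0) :
    2 * stdNormalPDF (x - 1) * stdNormalPDF (max l 0 * (x - 1) - 1) ≤ snCDF l x := by
  refine le_integral_Iic (integrable_snPDF l) (snPDF_nonneg l) fun t ht => ?_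
  have ht0 : t ≤ 0 := ht.2.trans hx
  have hp : 0 ≤ max l 0 := le_max_right _ _
  have h1 : stdNormalPDF (x - 1) ≤ stdNormalPDF t := stdNormalPDF_anti ht.1 ht0
  have h2 : stdNormalPDF (max l 0 * (x - 1) - 1) ≤ stdNormalCDF (l * t) := by
    refine (stdNormalPDF_sub_one_le_stdNormalCDF (by nlinarith)).trans (stdNormalCDF_mono ?_)
    calc max l 0 * (x - 1) ≤ max l 0 * t := mul_le_mul_of_nonneg_left ht.1 hp
      _ ≤ l * t := mul_le_mul_of_nonpos_right (le_max_left _ _) ht0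
  have := (stdNormalPDF_pos (x - 1)).le
  have := (stdNormalPDF_pos t).le
  have := (stdNormalPDF_pos (max l 0 * (x - 1) - 1)).le
  gcongr

lemma snCDF_pos (l x : ℝ) : 0 < snCDF l x := by
  refine lt_of_lt_of_le ?_ ((le_snCDF l (min_le_right x 0)).trans (snCDF_mono l (min_le_left x 0)))
  have h1 := stdNormalPDF_pos (min x 0 - 1)
  have h2 := stdNormalPDF_pos (max l 0 * (min x 0 - 1) - 1)
  positivity

lemma snCDF_le (l : ℝ) {x : ℝ} (hx : x ≤ 0) :
    snCDF l x ≤ 8 * exp (-((1 + max l 0 ^ 2) * x ^ 2) / 2) := by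
  have h1 : ∀ t ∈ Set.Iic x, stdNormalCDF (l * t) ≤ 2 * exp (-((max l 0 * x) ^ 2) / 2) := by
    intro t ht
    have ht : t ≤ x := ht
    rcases le_total l 0 with hl | hl
    · rw [max_eq_right hl]
      have := stdNormalCDF_le_one (l * t)
      simp only [zero_mul, ne_eq, OfNat.ofNat_ne_zero, not_false_eq_true, zero_pow, neg_zero,
        zero_div, exp_zero]
      linarith
    · rw [max_eq_left hl]
      exact (stdNormalCDF_mono (mul_le_mul_of_nonneg_left ht hl)).trans
        (stdNormalCDF_le_two_mul_exp (mul_nonpos_of_nonneg_of_nonpos hl hx))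
  calc snCDF l x
      ≤ ∫ t in Set.Iic x, 2 * (2 * exp (-((max l 0 * x) ^ 2) / 2)) * stdNormalPDF t := by
        rw [snCDF_eq]
        refine setIntegral_mono_on (integrable_snPDF l).integrableOn
          (integrable_stdNormalPDF.const_mul _).integrableOn measurableSet_Iic fun t ht => ?_
        have := stdNormalPDF_pos t
        have := h1 t ht
        calc _ ≤ 2 * stdNormalPDF t * (2 * exp (-((max l 0 * x) ^ 2) / 2)) := by gcongr
          _ = _ := by ring
    _ = 2 * (2 * exp (-((max l 0 * x) ^ 2) / 2)) * stdNormalCDF x := by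
        rw [integral_const_mul, ← stdNormalCDF_eq]
    _ ≤ 2 * (2 * exp (-((max l 0 * x) ^ 2) / 2)) * (2 * exp (-(x ^ 2) / 2)) := by
        gcongr
        exact stdNormalCDF_le_two_mul_exp hx
    _ = 8 * (exp (-((max l 0 * x) ^ 2) / 2) * exp (-(x ^ 2) / 2)) := by ring
    _ = _ := by rw [← exp_add]; ring_nf

/-- The Gaussian rate of decay of the skew normal left tail: the skewing factor `Φ(lt)`
contributes `l² / 2` to the rate exactly when `l > 0`. -/
lemma tendsto_log_snCDF_div_sq (l : ℝ) :
    Tendsto (fun x => log (snCDF l x) / x ^ 2) atBot (𝓝 (-((1 + max l 0 ^ 2) / 2))) := by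
  set p := max l 0 with hp
  have hinv : Tendsto (fun x : ℝ => x⁻¹) atBot (𝓝 0) := tendsto_inv_atBot_zero
  have hlow : Tendsto (fun x : ℝ => (log 2 + 2 * log (√(2 * π))⁻¹) * x⁻¹ ^ 2 -
      (1 - x⁻¹) ^ 2 / 2 - (p * (1 - x⁻¹) - x⁻¹) ^ 2 / 2) atBot (𝓝 (-((1 + p ^ 2) / 2))) := by
    have hc : Continuous fun y : ℝ => (log 2 + 2 * log (√(2 * π))⁻¹) * y ^ 2 -
      (1 - y) ^ 2 / 2 - (p * (1 - y) - y) ^ 2 / 2 := by fun_prop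
    have := (hc.tendsto 0).comp hinv
    refine this.trans (le_of_eq ?_)
    congr 1
    ring
  have hup : Tendsto (fun x : ℝ => log 8 * x⁻¹ ^ 2 - (1 + p ^ 2) / 2) atBot
      (𝓝 (-((1 + p ^ 2) / 2))) := by
    simpa using ((hinv.pow 2).const_mul (log 8)).sub_const ((1 + p ^ 2) / 2)
  refine tendsto_of_tendsto_of_tendsto_of_le_of_le' hlow hup ?_ ?_
  · filter_upwards [eventually_lt_atBot (0 : ℝ)] with x hx
    have hx0 : x ≠ 0 := hx.ne
    rw [le_div_iff₀ (by positivity)]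
    have h1 := stdNormalPDF_pos (x - 1)
    have h2 := stdNormalPDF_pos (p * (x - 1) - 1)
    have h3 := log_le_log (by positivity) (le_snCDF l hx.le)
    rw [← hp, log_mul (by positivity) h2.ne', log_mul two_ne_zero h1.ne'] at h3
    have hs : 0 < (√(2 * π))⁻¹ := by positivity
    simp only [stdNormalPDF] at h3
    rw [log_mul hs.ne' (exp_pos _).ne', log_mul hs.ne' (exp_pos _).ne', log_exp, log_exp] at h3
    refine le_trans (le_of_eq ?_) h3
    field_simp
    ring
  · filter_upwards [eventually_lt_atBot (0 : ℝ)] with x hx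
    have hx0 : x ≠ 0 := hx.ne
    rw [div_le_iff₀ (by positivity)]
    have h3 := log_le_log (snCDF_pos l x) (snCDF_le l hx.le)
    rw [← hp, log_mul (by norm_num) (exp_pos _).ne', log_exp] at h3
    refine h3.trans (le_of_eq ?_)
    field_simp
    ring

lemma tendsto_quantile_atBot {l : ℝ} {Q : ℝ → ℝ}
    (hQ : ∀ u ∈ Set.Ioo (0 : ℝ) 1, snCDF l (Q u) = u) : Tendsto Q (𝓝[>] 0) atBot := by
  refine tendsto_atBot.2 fun M => ?_
  have hM : (0 : ℝ) < min (snCDF l M) 1 := lt_min (snCDF_pos l M) one_pos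
  filter_upwards [Ioo_mem_nhdsGT hM] with u hu
  by_contra! h
  have := snCDF_mono l h.le
  rw [hQ u ⟨hu.1, hu.2.trans_le (min_le_right _ _)⟩] at this
  exact absurd (hu.2.trans_le (min_le_left _ _)) (not_lt.2 this)

/-- The ratio of two skew normal quantiles is governed by the Gaussian rates of their tails. -/
lemma tendsto_quantile_ratio {l₁ l₂ : ℝ} {Q₁ Q₂ : ℝ → ℝ}
    (hQ₁ : ∀ u ∈ Set.Ioo (0 : ℝ) 1, snCDF l₁ (Q₁ u) = u)
    (hQ₂ : ∀ u ∈ Set.Ioo (0 : ℝ) 1, snCDF l₂ (Q₂ u) = u) :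
    Tendsto (fun u => Q₁ u / Q₂ u) (𝓝[>] 0)
      (𝓝 (√((1 + max l₂ 0 ^ 2) / (1 + max l₁ 0 ^ 2)))) := by
  have h1 := tendsto_quantile_atBot hQ₁
  have h2 := tendsto_quantile_atBot hQ₂
  have h := ((tendsto_log_snCDF_div_sq l₂).comp h2).div ((tendsto_log_snCDF_div_sq l₁).comp h1)
    (by have : 0 < (1 + max l₁ 0 ^ 2) / 2 := by positivity
        linarith)
  have h' := (h.sqrt)
  rw [neg_div_neg_eq, div_div_div_cancel_right₀ two_ne_zero] at h'
  refine h'.congr' ?_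
  filter_upwards [h1.eventually_lt_atBot 0, h2.eventually_lt_atBot 0,
    Ioo_mem_nhdsGT (zero_lt_one (α := ℝ))] with u hu1 hu2 hu
  have hlog : log u ≠ 0 := (log_neg hu.1 hu.2).ne
  simp only [Function.comp_apply, Pi.div_apply]
  rw [hQ₁ u hu, hQ₂ u hu, div_div_div_cancel_left' _ _ hlog, ← div_pow,
    sqrt_sq (div_nonneg_of_nonpos hu1.le hu2.le)]

/-! ### Positivity of the rate -/

/-- The piecewise constant `γ₁` is `√((1 + (λ₂⁺)²) / (1 + (λ₁⁺)²))`. -/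
lemma gamma_eq_sqrt (l₁ l₂ : ℝ) :
    (if 0 < l₁ ∧ 0 < l₂ then √((1 + l₂ ^ 2) / (1 + l₁ ^ 2))
      else if l₁ ≤ 0 ∧ 0 < l₂ then √(1 + l₂ ^ 2)
      else if 0 < l₁ ∧ l₂ ≤ 0 then 1 / √(1 + l₁ ^ 2)
      else 1) = √((1 + max l₂ 0 ^ 2) / (1 + max l₁ 0 ^ 2)) := by
  rcases lt_or_ge 0 l₁ with h1 | h1 <;> rcases lt_or_ge 0 l₂ with h2 | h2
  · simp [h1, h2, h1.le, h2.le]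
  · simp [h1, h1.not_ge, h2.not_gt, h1.le, h2]
  · simp [h2, h1.not_gt, h1, h2.le]
  · simp [h1, h2, h1.not_gt, h2.not_gt]

/-- Positivity of `β₁`, given that `-B / |Q₂|` has the nonnegative limit `α₁ γ₁ + α₂`. -/
lemma beta_pos {ρ α₁ α₂ l₁ l₂ γ : ℝ} (hρ : ρ ∈ Set.Ioo (-1 : ℝ) 1) (hα₁ : α₁ ≠ 0)
    (hl₁ : l₁ = (α₁ + ρ * α₂) / √(1 + α₂ ^ 2 * (1 - ρ ^ 2)))
    (hl₂ : l₂ = (α₂ + ρ * α₁) / √(1 + α₁ ^ 2 * (1 - ρ ^ 2)))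
    (hγ : γ = √((1 + max l₂ 0 ^ 2) / (1 + max l₁ 0 ^ 2))) (hb : 0 ≤ α₁ * γ + α₂) :
    0 < (γ - ρ) / (1 - ρ ^ 2) + α₁ * (α₁ * γ + α₂) := by
  obtain ⟨hr1, hr2⟩ := hρ
  have hv : 0 < 1 - ρ ^ 2 := by nlinarith
  have hD1 : 0 < 1 + α₂ ^ 2 * (1 - ρ ^ 2) := by positivity
  have hD2 : 0 < 1 + α₁ ^ 2 * (1 - ρ ^ 2) := by positivity
  set D1 := 1 + α₂ ^ 2 * (1 - ρ ^ 2) with hD1e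
  set D2 := 1 + α₁ ^ 2 * (1 - ρ ^ 2) with hD2e
  have hs1 : 0 < √D1 := sqrt_pos.2 hD1
  have hs2 : 0 < √D2 := sqrt_pos.2 hD2
  set N := 1 + α₁ ^ 2 + α₂ ^ 2 + 2 * ρ * α₁ * α₂ with hN
  have hN1 : N = D1 + (α₁ + ρ * α₂) ^ 2 := by rw [hN, hD1e]; ring
  have hN2 : N = D2 + (α₂ + ρ * α₁) ^ 2 := by rw [hN, hD2e]; ring
  have hNpos : 0 < N := by rw [hN1]; positivity
  have e1 : 1 + l₁ ^ 2 = N / D1 := by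
    rw [hl₁, div_pow, sq_sqrt hD1.le, hN1]; field_simp
  have e2 : 1 + l₂ ^ 2 = N / D2 := by
    rw [hl₂, div_pow, sq_sqrt hD2.le, hN2]; field_simp
  have hγ0 : 0 < γ := by rw [hγ]; positivity
  have hγ2 : γ ^ 2 = (1 + max l₂ 0 ^ 2) / (1 + max l₁ 0 ^ 2) := by
    rw [hγ, sq_sqrt (by positivity)]
  -- Clearing denominators, the claim compares `γ` with the minimiser of the exponent
  -- `(x² - 2ρx + 1) / (1 - ρ²) + (α₁x + α₂)²`.
  have hβ : (γ - ρ) / (1 - ρ ^ 2) + α₁ * (α₁ * γ + α₂) =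
      (γ * D2 - (ρ - α₁ * α₂ * (1 - ρ ^ 2))) / (1 - ρ ^ 2) := by
    rw [hD2e]; field_simp; ring
  have hdet : (ρ - α₁ * α₂ * (1 - ρ ^ 2)) ^ 2 < D1 * D2 := by
    have : D1 * D2 - (ρ - α₁ * α₂ * (1 - ρ ^ 2)) ^ 2 = (1 - ρ ^ 2) * N := by
      rw [hD1e, hD2e, hN]; ring
    nlinarith [mul_pos hv hNpos]
  have hsuff : D1 ≤ γ ^ 2 * D2 → 0 < (γ - ρ) / (1 - ρ ^ 2) + α₁ * (α₁ * γ + α₂) := by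
    intro h
    rw [hβ]
    refine div_pos (sub_pos.2 ?_) hv
    refine lt_of_pow_lt_pow_left₀ 2 (by positivity) (hdet.trans_le ?_)
    nlinarith
  have hsgn1 : l₁ ≤ 0 → α₁ + ρ * α₂ ≤ 0 := fun h => by
    by_contra! h'
    have : 0 < l₁ := hl₁ ▸ div_pos h' hs1
    linarith
  have hsgn1' : 0 < l₁ → 0 < α₁ + ρ * α₂ := fun h => by
    by_contra! h'
    have : l₁ ≤ 0 := hl₁ ▸ div_nonpos_of_nonpos_of_nonneg h' hs1.le
    linarith
  have hsgn2 : l₂ ≤ 0 → α₂ + ρ * α₁ ≤ 0 := fun h => by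
    by_contra! h'
    have : 0 < l₂ := hl₂ ▸ div_pos h' hs2
    linarith
  rcases lt_or_ge 0 l₂ with h2 | h2
  · rw [max_eq_left h2.le, e2] at hγ2
    rcases lt_or_ge 0 l₁ with h1 | h1
    · rw [max_eq_left h1.le, e1] at hγ2
      refine hsuff (le_of_eq ?_)
      rw [hγ2]; field_simp
    · rw [max_eq_right h1] at hγ2
      apply hsuff
      have : γ ^ 2 * D2 = N := by rw [hγ2]; field_simp; simp
      rw [this, hN1]
      nlinarith [sq_nonneg (α₁ + ρ * α₂)]
  · rw [max_eq_right h2] at hγ2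
    have s2 := hsgn2 h2
    rcases lt_or_gt_of_ne hα₁ with ha | ha
    · -- With `α₁ < 0` the signs of `l₁`, `l₂` and `α₁ γ + α₂` are incompatible.
      exfalso
      have hc : 0 < α₂ := by
        have := mul_neg_of_neg_of_pos ha hγ0
        linarith
      have hρ0 : 0 < ρ := by
        by_contra! h
        have := mul_nonneg_of_nonpos_of_nonpos h ha.le
        linarith
      have hca : α₂ ≤ ρ * (-α₁) := by linarith
      rcases lt_or_ge 0 l₁ with h1 | h1
      · have s1 := hsgn1' h1
        have h3 : ρ * α₂ ≤ ρ * (ρ * (-α₁)) := mul_le_mul_of_nonneg_left hca hρ0.le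
        have h4 : 0 < (1 - ρ ^ 2) * (-α₁) := mul_pos hv (neg_pos.2 ha)
        linarith
      · rw [max_eq_right h1] at hγ2
        have hγ1 : γ = 1 := by
          rw [hγ]; simp [max_eq_right h1, max_eq_right h2]
        rw [hγ1] at hb
        have h4 : 0 < (1 - ρ) * (-α₁) := mul_pos (sub_pos.2 hr2) (neg_pos.2 ha)
        linarith
    · rcases lt_or_ge 0 l₁ with h1 | h1
      · have hγρ : ρ ≤ γ := by
          have : α₁ * ρ ≤ α₁ * γ := by linarith
          exact le_of_mul_le_mul_left this ha
        rcases hγρ.lt_or_eq with hlt | heq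
        · have := div_pos (sub_pos.2 hlt) hv
          have := mul_nonneg ha.le hb
          linarith
        · exfalso
          rw [max_eq_left h1.le, e1] at hγ2
          have hc : α₂ = -(ρ * α₁) := by rw [← heq] at hb; linarith
          have h3 : γ ^ 2 * N = D1 := by rw [hγ2]; field_simp; simp
          rw [← heq, hN, hD1e, hc] at h3
          have h5 : (1 - ρ ^ 2) = 0 := by linear_combination -h3
          linarith
      · rw [max_eq_right h1] at hγ2
        have hγ1 : γ = 1 := by
          rw [hγ]; simp [max_eq_right h1, max_eq_right h2]
        rw [hγ1] at hb ⊢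
        have := div_pos (sub_pos.2 hr2) hv
        have := mul_nonneg ha.le hb
        linarith

/-! ### The asymptotics of the conditional probability -/

/-- Substitution `z = c - t / q`. -/
lemma integral_Iic_eq_integral_Ioi (f : ℝ → ℝ) (c : ℝ) {q : ℝ} (hq : 0 < q) :
    ∫ z in Set.Iic c, f z = q⁻¹ * ∫ t in Set.Ioi (0 : ℝ), f (c - t / q) := by
  have h1 : ∫ z in Set.Iic c, f z = ∫ s in Set.Ioi (0 : ℝ), f (c - s) := by
    rw [← integral_Ici_eq_integral_Ioi, ← integral_indicator measurableSet_Iic,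
      ← integral_indicator measurableSet_Ici, ← integral_sub_left_eq_self _ volume c]
    congr 1
    funext s
    by_cases hs : 0 ≤ s <;> simp [Set.indicator, hs]
  have h2 := integral_comp_mul_right_Ioi (fun s => f (c - s)) 0 (inv_pos.2 hq)
  rw [zero_mul, inv_inv, smul_eq_mul] at h2
  simp only [div_eq_mul_inv]
  rw [h1, h2, inv_mul_cancel_left₀ hq.ne']

/-- Theorem 2(a) of the paper: if `B(u) → -∞` then `β₁ > 0` and
`P₁(u) ~ e^{-A₁(u)²/(2(1-ρ²)) - B(u)²/2} /
  (2π√(1-ρ²)·β₁·|Q₂(u)|·Φ(λ₂Q₂(u))·|B(u)|)`. -/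
theorem conditional_prob_asymptotics_B_atBot (ρ α₁ α₂ : ℝ)
    (hρ : ρ ∈ Set.Ioo (-1 : ℝ) 1) (hα₁ : α₁ ≠ 0) (l₁ l₂ γ₁ β₁ : ℝ)
    (hl₁ : l₁ = (α₁ + ρ * α₂) / Real.sqrt (1 + α₂ ^ 2 * (1 - ρ ^ 2)))
    (hl₂ : l₂ = (α₂ + ρ * α₁) / Real.sqrt (1 + α₁ ^ 2 * (1 - ρ ^ 2)))
    (hγ₁ : γ₁ =
      if 0 < l₁ ∧ 0 < l₂ then Real.sqrt ((1 + l₂ ^ 2) / (1 + l₁ ^ 2))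
      else if l₁ ≤ 0 ∧ 0 < l₂ then Real.sqrt (1 + l₂ ^ 2)
      else if 0 < l₁ ∧ l₂ ≤ 0 then 1 / Real.sqrt (1 + l₁ ^ 2)
      else 1)
    (hβ₁ : β₁ = (γ₁ - ρ) / (1 - ρ ^ 2) + α₁ * (α₁ * γ₁ + α₂))
    (Q₁ Q₂ : ℝ → ℝ)
    (hQ₁ : ∀ u ∈ Set.Ioo (0 : ℝ) 1, snCDF l₁ (Q₁ u) = u)
    (hQ₂ : ∀ u ∈ Set.Ioo (0 : ℝ) 1, snCDF l₂ (Q₂ u) = u)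
    (hB : Tendsto (fun u => α₁ * Q₁ u + α₂ * Q₂ u) (𝓝[>] (0 : ℝ)) atBot) :
    0 < β₁ ∧
    Tendsto (fun u =>
      (∫ z in Set.Iic (Q₁ u),
        (Real.sqrt (2 * Real.pi * (1 - ρ ^ 2)))⁻¹ *
          Real.exp (-(z - ρ * Q₂ u) ^ 2 / (2 * (1 - ρ ^ 2))) *
          (stdNormalCDF (α₁ * z + α₂ * Q₂ u) / stdNormalCDF (l₂ * Q₂ u))) /
      (Real.exp (-(Q₁ u - ρ * Q₂ u) ^ 2 / (2 * (1 - ρ ^ 2)) -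
          (α₁ * Q₁ u + α₂ * Q₂ u) ^ 2 / 2) /
        (2 * Real.pi * Real.sqrt (1 - ρ ^ 2) * β₁ * |Q₂ u| *
          stdNormalCDF (l₂ * Q₂ u) * |α₁ * Q₁ u + α₂ * Q₂ u|)))
      (𝓝[>] (0 : ℝ)) (𝓝 1) := by
  obtain ⟨hr1, hr2⟩ := hρ
  have hv : 0 < 1 - ρ ^ 2 := by nlinarith
  rw [gamma_eq_sqrt] at hγ₁
  have hr := tendsto_quantile_ratio hQ₁ hQ₂
  rw [← hγ₁] at hr
  have hQ₂bot := tendsto_quantile_atBot hQ₂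
  have hneg := hQ₂bot.eventually_lt_atBot 0
  have hq : Tendsto (fun u => |Q₂ u|) (𝓝[>] (0 : ℝ)) atTop :=
    tendsto_abs_atBot_atTop.comp hQ₂bot
  have hA : Tendsto (fun u => (Q₁ u - ρ * Q₂ u) / |Q₂ u|) (𝓝[>] (0 : ℝ)) (𝓝 (-(γ₁ - ρ))) := by
    refine ((hr.sub_const ρ).neg).congr' ?_
    filter_upwards [hneg] with u hu
    have := hu.ne
    rw [abs_of_neg hu]
    field_simp
  have hBq : Tendsto (fun u => -(α₁ * Q₁ u + α₂ * Q₂ u) / |Q₂ u|) (𝓝[>] (0 : ℝ))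
      (𝓝 (α₁ * γ₁ + α₂)) := by
    refine ((hr.const_mul α₁).add_const α₂).congr' ?_
    filter_upwards [hneg] with u hu
    have := hu.ne
    rw [abs_of_neg hu]
    field_simp
  have hb : 0 ≤ α₁ * γ₁ + α₂ := by
    refine ge_of_tendsto hBq ?_
    filter_upwards [hB.eventually_lt_atBot 0] with u hu
    exact div_nonneg (by linarith) (abs_nonneg _)
  have hβ : 0 < β₁ := hβ₁ ▸ beta_pos ⟨hr1, hr2⟩ hα₁ hl₁ hl₂ hγ₁ hb
  refine ⟨hβ, ?_⟩
  have hlap := tendsto_laplace (α := α₁) hv hβ (by rw [hβ₁]; ring) hq hA hB hBq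
  have hmills := tendsto_mills.comp hB
  have hlim := (hlap.mul hmills).const_mul β₁
  rw [mul_one, mul_one_div_cancel hβ.ne'] at hlim
  refine hlim.congr' ?_
  filter_upwards [hneg, hB.eventually_lt_atBot 0] with u hu hBu
  have hqu : 0 < |Q₂ u| := abs_pos.2 hu.ne
  rw [integral_Iic_eq_integral_Ioi _ _ hqu, abs_of_neg hBu]
  set q := |Q₂ u| with hqe
  set A := Q₁ u - ρ * Q₂ u with hAe
  set B := α₁ * Q₁ u + α₂ * Q₂ u with hBe
  have hΦB := stdNormalCDF_pos B
  have hΦ2 := stdNormalCDF_pos (l₂ * Q₂ u)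
  -- The integrand in the variable `t = |Q₂| (Q₁ - z)`, with its boundary value factored out.
  have hint : ∀ t, (√(2 * π * (1 - ρ ^ 2)))⁻¹ *
      exp (-(Q₁ u - t / q - ρ * Q₂ u) ^ 2 / (2 * (1 - ρ ^ 2))) *
      (stdNormalCDF (α₁ * (Q₁ u - t / q) + α₂ * Q₂ u) / stdNormalCDF (l₂ * Q₂ u)) =
      ((√(2 * π * (1 - ρ ^ 2)))⁻¹ * exp (-A ^ 2 / (2 * (1 - ρ ^ 2))) *
        (stdNormalCDF B / stdNormalCDF (l₂ * Q₂ u))) *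
      (exp (A * (t / q) / (1 - ρ ^ 2) - (t / q) ^ 2 / (2 * (1 - ρ ^ 2))) *
        (stdNormalCDF (B - α₁ * (t / q)) / stdNormalCDF B)) := by
    intro t
    have e1 : -(Q₁ u - t / q - ρ * Q₂ u) ^ 2 / (2 * (1 - ρ ^ 2)) = -A ^ 2 / (2 * (1 - ρ ^ 2)) +
        (A * (t / q) / (1 - ρ ^ 2) - (t / q) ^ 2 / (2 * (1 - ρ ^ 2))) := by
      rw [hAe]; field_simp; ring
    have e2 : α₁ * (Q₁ u - t / q) + α₂ * Q₂ u = B - α₁ * (t / q) := by rw [hBe]; ring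
    rw [e1, e2, exp_add]
    field_simp
  simp_rw [hint]
  rw [integral_const_mul, exp_sub]
  simp only [Function.comp_apply, ← hBe]
  generalize (∫ t in Set.Ioi (0 : ℝ),
    exp (A * (t / q) / (1 - ρ ^ 2) - (t / q) ^ 2 / (2 * (1 - ρ ^ 2))) *
      (stdNormalCDF (B - α₁ * (t / q)) / stdNormalCDF B)) = J
  have hs : √(2 * π * (1 - ρ ^ 2)) = √(2 * π) * √(1 - ρ ^ 2) := sqrt_mul (by positivity) _
  have hpdf : stdNormalPDF B = (√(2 * π))⁻¹ * (exp (B ^ 2 / 2))⁻¹ := by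
    rw [stdNormalPDF, ← exp_neg, neg_div]
  have h2pi : 2 * π = √(2 * π) * √(2 * π) := (mul_self_sqrt (by positivity)).symm
  have hs1 : 0 < √(2 * π) := by positivity
  have hs2 : 0 < √(1 - ρ ^ 2) := sqrt_pos.2 hv
  rw [hs, hpdf]
  generalize √(2 * π) = s at *
  generalize stdNormalCDF (l₂ * Q₂ u) = P at *
  rw [h2pi]
  field_simp
end

section
/- In the bivariate skew normal setting with α₁ ≠ 0 and α₂ ≠ 0, suppose λ₁ < 0 and λ₂ < 0 (equivalently α₁ + ρα₂ < 0 and α₂ + ρα₁ < 0). Then, as u → 0⁺, P₁(u) + P₂(u) ~ √((1+ρ)/(1-ρ))·π^{-ρ/(1+ρ)}·u^{(1-ρ)/(1+ρ)}·(-log u)^{-ρ/(1+ρ)}, where f ~ g means f/g → 1. -/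
/-!
Since `λ₁, λ₂ < 0`, the factor `Φ (λᵢ t)` tends to `1` in the left tail, so both marginal cdfs are
asymptotic to `2 Φ(x)`, and `qᵢ = -Qᵢ(u)` satisfies `qᵢ exp (qᵢ² / 2) u → 2 / √(2π)`. Taking
logarithms shows `q₁² - q₂² → 0`: the two contributions `(q₁² - q₂²) / 2` and `log (q₁ / q₂)` have
the same sign, so neither can compensate for the other.

The hypotheses also give `(1 + ρ) (α₁ + α₂) < 0`, so near the endpoint of integration, where the
conditional normal density concentrates, `α₁ z + α₂ Q₂ ≈ (α₁ + α₂) Q₁ → +∞` and the skewing factors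
in `P₁` are asymptotically `1`. Hence `P₁ ~ Φ (-b)` with `b = (q₁ - ρ q₂) / √(1 - ρ²)`, that is,
`b exp (b² / 2) P₁ → 1 / √(2π)`. Both this and the tail of the skew normal cdf are instances of one
dominated convergence argument, `laplace_tail`.

Finally `b² = κ q₁² + o(1)` and `b ~ √κ q₁` with `κ = (1 - ρ) / (1 + ρ)`, while
`-log u ~ q₁² / 2`. Comparing logarithms (`half_asymp`) shows that `P₁` is asymptotic to one half of
the claimed equivalent; `P₂` is handled by exchanging the indices.
-/

open Real Filter Topology MeasureTheory

/-! ### The standard normal distribution function -/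

lemma stdNormal_integrable :
    Integrable (fun t : ℝ => (Real.sqrt (2 * Real.pi))⁻¹ * Real.exp (-(t ^ 2) / 2)) := by
  simpa [ProbabilityTheory.gaussianPDFReal_def] using
    ProbabilityTheory.integrable_gaussianPDFReal 0 1

lemma stdNormal_integral :
    ∫ t : ℝ, (Real.sqrt (2 * Real.pi))⁻¹ * Real.exp (-(t ^ 2) / 2) = 1 := by
  simpa [ProbabilityTheory.gaussianPDFReal_def] using
    ProbabilityTheory.integral_gaussianPDFReal_eq_one 0 (v := 1) one_ne_zero

lemma stdNormalCDF_tendsto : Tendsto stdNormalCDF atTop (𝓝 1) := by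
  rw [← stdNormal_integral]
  exact (aecover_Iic tendsto_id).integral_tendsto_of_countably_generated stdNormal_integrable

/-! ### A Laplace-type limit for Gaussian tails -/

/-- The Mills ratio limit `a * exp (a ^ 2 / 2) * ∫ exp (-(a + s) ^ 2 / 2) ds → 1`, with a weight
`g` which need only tend to `1` on the scale `s ~ 1 / a` where the integral concentrates. -/
lemma laplace_tail {ι : Type*} {l : Filter ι} [l.IsCountablyGenerated] (a : ι → ℝ)
    (g : ι → ℝ → ℝ) (ha : Tendsto a l atTop) (hm : ∀ i, Measurable (g i))
    (h0 : ∀ i s, 0 ≤ g i s) (h1 : ∀ i s, g i s ≤ 1)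
    (hg : ∀ t, 0 < t → Tendsto (fun i => g i (t / a i)) l (𝓝 1)) :
    Tendsto (fun i => a i * Real.exp (a i ^ 2 / 2) *
      ∫ s in Set.Ioi (0 : ℝ), Real.exp (-(a i + s) ^ 2 / 2) * g i s) l (𝓝 1) := by
  have key : Tendsto (fun i => ∫ t in Set.Ioi (0 : ℝ),
      Real.exp (-t - (t / a i) ^ 2 / 2) * g i (t / a i)) l
      (𝓝 (∫ t in Set.Ioi (0 : ℝ), Real.exp (-t))) := by
    apply tendsto_integral_filter_of_dominated_convergence (fun t => Real.exp (-t))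
    · refine Eventually.of_forall fun i => Measurable.aestronglyMeasurable ?_
      exact (by fun_prop : Measurable fun t : ℝ => Real.exp (-t - (t / a i) ^ 2 / 2)).mul
        ((hm i).comp (by fun_prop))
    · refine Eventually.of_forall fun i => ae_of_all _ fun t => ?_
      rw [Real.norm_of_nonneg (mul_nonneg (Real.exp_pos _).le (h0 _ _))]
      calc Real.exp (-t - (t / a i) ^ 2 / 2) * g i (t / a i)
          ≤ Real.exp (-t - (t / a i) ^ 2 / 2) * 1 := by
            gcongr
            exact h1 _ _
        _ ≤ Real.exp (-t) := by
            rw [mul_one]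
            gcongr
            nlinarith [sq_nonneg (t / a i)]
    · have h := exp_neg_integrableOn_Ioi 0 one_pos
      simp only [neg_mul, one_mul] at h
      exact h
    · refine (ae_restrict_iff' measurableSet_Ioi).2 (ae_of_all _ fun t ht => ?_)
      have hta : Tendsto (fun i => t / a i) l (𝓝 0) := ha.const_div_atTop t
      have h2 : Tendsto (fun i => Real.exp (-t - (t / a i) ^ 2 / 2)) l
          (𝓝 (Real.exp (-t - 0 ^ 2 / 2))) :=
        (Real.continuous_exp.tendsto _).comp
          (tendsto_const_nhds.sub ((hta.pow 2).div_const 2))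
      simpa using h2.mul (hg t ht)
  rw [integral_exp_neg_Ioi_zero] at key
  refine key.congr' ?_
  filter_upwards [ha.eventually_gt_atTop 0] with i hi
  have hsub := integral_comp_mul_left_Ioi
    (fun s => Real.exp (-(a i + s) ^ 2 / 2) * g i s) 0 (inv_pos.2 hi)
  simp only [mul_zero, inv_inv, smul_eq_mul] at hsub
  rw [mul_comm (a i), mul_assoc, ← hsub, ← integral_const_mul]
  congr 1
  ext t
  rw [← mul_assoc, ← Real.exp_add]
  congr 2
  · field_simp
    ring
  · rw [div_eq_inv_mul]

lemma integral_Iic_subst (f : ℝ → ℝ) (x : ℝ) {σ : ℝ} (hσ : 0 < σ) :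
    ∫ z in Set.Iic x, f z = σ * ∫ s in Set.Ioi (0 : ℝ), f (x - σ * s) := by
  have h := integral_comp_mul_left_Ioi (fun y => f (x - y)) 0 hσ
  simp only [mul_zero, smul_eq_mul] at h
  rw [h, mul_inv_cancel_left₀ hσ.ne', ← integral_Ici_eq_integral_Ioi]
  have h2 := (Measure.measurePreserving_sub_left volume x).setIntegral_preimage_emb
    (MeasurableEquiv.subLeft x).measurableEmbedding f (Set.Iic x)
  rw [← h2]
  congr 2
  ext y
  simp

/-! ### Skew normal tails and quantiles -/

lemma snCDF_integrable (l : ℝ) : Integrable (fun t : ℝ =>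
    2 * ((Real.sqrt (2 * Real.pi))⁻¹ * Real.exp (-(t ^ 2) / 2)) * stdNormalCDF (l * t)) := by
  refine (stdNormal_integrable.const_mul 2).mul_bdd (c := 1) ?_ ?_
  · exact (stdNormalCDF_mono.measurable.comp (by fun_prop)).aestronglyMeasurable
  · refine ae_of_all _ fun t => ?_
    rw [Real.norm_of_nonneg (stdNormalCDF_pos _).le]
    exact stdNormalCDF_le_one _

lemma snCDF_integrand_pos (l t : ℝ) : 0 <
    2 * ((Real.sqrt (2 * Real.pi))⁻¹ * Real.exp (-(t ^ 2) / 2)) * stdNormalCDF (l * t) :=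
  mul_pos (by positivity) (stdNormalCDF_pos _)

lemma snQuantile_tendsto (l : ℝ) (Q : ℝ → ℝ)
    (hQ : ∀ u ∈ Set.Ioo (0 : ℝ) 1, snCDF l (Q u) = u) :
    Tendsto (fun u => -Q u) (𝓝[>] (0 : ℝ)) atTop := by
  rw [tendsto_atTop]
  intro M
  have hpos : 0 < min (snCDF l (-M)) 1 := lt_min (snCDF_pos _ _) one_pos
  filter_upwards [Ioo_mem_nhdsGT hpos] with u hu
  by_contra! h
  have h1 : snCDF l (-M) ≤ snCDF l (Q u) := snCDF_mono l (by linarith)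
  rw [hQ u ⟨hu.1, hu.2.trans_le (min_le_right _ _)⟩] at h1
  exact absurd (hu.2.trans_le (min_le_left _ _)) (not_lt.2 h1)

/-- For a negative skewness parameter the left tail is twice the Gaussian one; this is the
quantile form, with `q = -Q u`, of `F (-q) ~ 2 * φ q / q`. -/
lemma snQuantile_asymp (l : ℝ) (hl : l < 0) (Q : ℝ → ℝ)
    (hQ : ∀ u ∈ Set.Ioo (0 : ℝ) 1, snCDF l (Q u) = u) :
    Tendsto (fun u => -Q u * Real.exp ((-Q u) ^ 2 / 2) * u) (𝓝[>] (0 : ℝ))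
      (𝓝 (2 * (Real.sqrt (2 * Real.pi))⁻¹)) := by
  have hq := snQuantile_tendsto l Q hQ
  have h := laplace_tail (fun u => -Q u) (fun u s => stdNormalCDF (l * (Q u - s))) hq
    (fun u => stdNormalCDF_mono.measurable.comp (by fun_prop))
    (fun _ _ => (stdNormalCDF_pos _).le) (fun _ _ => stdNormalCDF_le_one _) (by
      intro t _
      refine stdNormalCDF_tendsto.comp ?_
      have h1 : Tendsto (fun u => -Q u + t / -Q u) (𝓝[>] (0 : ℝ)) atTop :=
        hq.atTop_add (hq.const_div_atTop t)
      refine (h1.const_mul_atTop (neg_pos.2 hl)).congr fun u => ?_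
      ring)
  have h2 := h.const_mul (2 * (Real.sqrt (2 * Real.pi))⁻¹)
  rw [mul_one] at h2
  refine h2.congr' ?_
  filter_upwards [Ioo_mem_nhdsGT one_pos] with u hu
  have e : snCDF l (Q u) = 2 * (Real.sqrt (2 * Real.pi))⁻¹ *
      ∫ s in Set.Ioi (0 : ℝ), Real.exp (-(-Q u + s) ^ 2 / 2) * stdNormalCDF (l * (Q u - s)) := by
    rw [snCDF, integral_Iic_subst _ _ one_pos, one_mul, ← integral_const_mul]
    congr 1
    ext s
    rw [show -(-Q u + s) ^ 2 / 2 = -((Q u - 1 * s) ^ 2) / 2 by ring, one_mul]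
    ring
  rw [hQ u hu] at e
  calc _ = -Q u * Real.exp ((-Q u) ^ 2 / 2) * (2 * (Real.sqrt (2 * Real.pi))⁻¹ *
        ∫ s in Set.Ioi (0 : ℝ), Real.exp (-(-Q u + s) ^ 2 / 2) *
          stdNormalCDF (l * (Q u - s))) := by ring
    _ = _ := by rw [← e]

lemma log_quantile {c : ℝ} (hc : 0 < c) (p : ℝ → ℝ) (hp : Tendsto p (𝓝[>] (0 : ℝ)) atTop)
    (h : Tendsto (fun u => p u * Real.exp (p u ^ 2 / 2) * u) (𝓝[>] (0 : ℝ)) (𝓝 c)) :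
    Tendsto (fun u => Real.log (p u) + p u ^ 2 / 2 + Real.log u) (𝓝[>] (0 : ℝ))
      (𝓝 (Real.log c)) := by
  refine (h.log hc.ne').congr' ?_
  filter_upwards [hp.eventually_gt_atTop 0, self_mem_nhdsWithin] with u hu hu0
  have hu0 : 0 < u := hu0
  rw [Real.log_mul (by positivity) hu0.ne', Real.log_mul hu.ne' (Real.exp_pos _).ne', Real.log_exp]

/-- Two quantile-type functions with the same asymptotic equation have squares that agree up to
`o(1)`, hence interchangeable Gaussian exponents `exp (-p ^ 2 / 2)`. -/
lemma sq_sub_sq_tendsto {c : ℝ} (hc : 0 < c) (p q : ℝ → ℝ)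
    (hp : Tendsto p (𝓝[>] (0 : ℝ)) atTop) (hq : Tendsto q (𝓝[>] (0 : ℝ)) atTop)
    (h1 : Tendsto (fun u => p u * Real.exp (p u ^ 2 / 2) * u) (𝓝[>] (0 : ℝ)) (𝓝 c))
    (h2 : Tendsto (fun u => q u * Real.exp (q u ^ 2 / 2) * u) (𝓝[>] (0 : ℝ)) (𝓝 c)) :
    Tendsto (fun u => p u ^ 2 - q u ^ 2) (𝓝[>] (0 : ℝ)) (𝓝 0) := by
  have h := ((log_quantile hc p hp h1).sub (log_quantile hc q hq h2)).abs.const_mul 2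
  rw [sub_self, abs_zero, mul_zero] at h
  refine squeeze_zero_norm' ?_ h
  filter_upwards [hp.eventually_gt_atTop 0, hq.eventually_gt_atTop 0] with u hpu hqu
  rw [Real.norm_eq_abs]
  -- the differences of the squares and of the logarithms have the same sign
  rcases le_total (p u) (q u) with hle | hle
  · have a := Real.log_le_log hpu hle
    have b : p u ^ 2 ≤ q u ^ 2 := by gcongr
    rw [abs_of_nonpos (by linarith), abs_of_nonpos (by linarith)]
    linarith
  · have a := Real.log_le_log hqu hle
    have b : q u ^ 2 ≤ p u ^ 2 := by gcongr
    rw [abs_of_nonneg (by linarith), abs_of_nonneg (by linarith)]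
    linarith

lemma sub_tendsto {l : Filter ℝ} (p q : ℝ → ℝ)
    (hp : Tendsto p l atTop) (hq : Tendsto q l atTop)
    (h : Tendsto (fun u => p u ^ 2 - q u ^ 2) l (𝓝 0)) :
    Tendsto (fun u => p u - q u) l (𝓝 0) := by
  refine (h.div_atTop (hp.atTop_add_atTop hq)).congr' ?_
  filter_upwards [hp.eventually_gt_atTop 0, hq.eventually_gt_atTop 0] with u hpu hqu
  field_simp
  ring

/-- The logarithmic form of `-log u ~ p ^ 2 / 2`. -/
lemma log_neg_log {c : ℝ} (hc : 0 < c) (p : ℝ → ℝ) (hp : Tendsto p (𝓝[>] (0 : ℝ)) atTop)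
    (h : Tendsto (fun u => p u * Real.exp (p u ^ 2 / 2) * u) (𝓝[>] (0 : ℝ)) (𝓝 c)) :
    Tendsto (fun u => Real.log (-Real.log u) - 2 * Real.log (p u)) (𝓝[>] (0 : ℝ))
      (𝓝 (-Real.log 2)) := by
  have hp2 : Tendsto (fun u => p u ^ 2) (𝓝[>] (0 : ℝ)) atTop :=
    (tendsto_pow_atTop two_ne_zero).comp hp
  have e1 := (log_quantile hc p hp h).div_atTop hp2
  have e2 : Tendsto (fun u => Real.log (p u) / p u ^ 2) (𝓝[>] (0 : ℝ)) (𝓝 0) := by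
    have := (isLittleO_log_id_atTop.tendsto_div_nhds_zero.comp hp).mul hp.inv_tendsto_atTop
    rw [zero_mul] at this
    refine this.congr fun u => ?_
    simp only [Function.comp, id, Pi.inv_apply]
    rw [pow_two, div_mul_eq_div_div, div_eq_mul_inv (Real.log (p u) / p u)]
  have e3 : Tendsto (fun u => -Real.log u / p u ^ 2) (𝓝[>] (0 : ℝ)) (𝓝 (1 / 2)) := by
    have := (e2.sub e1).add_const (1 / 2)
    rw [sub_zero, zero_add] at this
    refine this.congr' ?_
    filter_upwards [hp.eventually_gt_atTop 0] with u hu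
    field_simp
    ring
  have e4 := e3.log (by norm_num)
  rw [one_div, Real.log_inv] at e4
  refine e4.congr' ?_
  filter_upwards [hp.eventually_gt_atTop 0, Ioo_mem_nhdsGT one_pos] with u hu hu1
  rw [Real.log_div (neg_pos.2 (Real.log_neg hu1.1 hu1.2)).ne' (by positivity), Real.log_pow]
  norm_num

/-! ### The conditional probabilities -/

/-- With `X`, `Y → -∞` and `X - Y → 0`, the conditional probability has the same tail as the normal
cdf at `-b`, `b = (ρ * Y - X) / √(1 - ρ ^ 2)`. The weight `Φ (α * z + β * Y)` tends to `1` on the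
relevant scale because `α + β < 0`, and the normalising factor `Φ (m * Y)` does because `m < 0`. -/
lemma condProb_asymp (ρ α β m : ℝ) (hρ : ρ ∈ Set.Ioo (-1 : ℝ) 1) (hαβ : α + β < 0) (hm : m < 0)
    (X Y : ℝ → ℝ) (hX : Tendsto (fun u => -X u) (𝓝[>] (0 : ℝ)) atTop)
    (hY : Tendsto (fun u => -Y u) (𝓝[>] (0 : ℝ)) atTop)
    (hd : Tendsto (fun u => -X u - -Y u) (𝓝[>] (0 : ℝ)) (𝓝 0)) :
    Tendsto (fun u => (-X u - ρ * -Y u) / Real.sqrt (1 - ρ ^ 2) *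
        Real.exp (((-X u - ρ * -Y u) / Real.sqrt (1 - ρ ^ 2)) ^ 2 / 2) *
        ∫ z in Set.Iic (X u), (Real.sqrt (2 * Real.pi * (1 - ρ ^ 2)))⁻¹ *
            Real.exp (-(z - ρ * Y u) ^ 2 / (2 * (1 - ρ ^ 2))) *
            (stdNormalCDF (α * z + β * Y u) / stdNormalCDF (m * Y u)))
      (𝓝[>] (0 : ℝ)) (𝓝 (Real.sqrt (2 * Real.pi))⁻¹) := by
  obtain ⟨hρ1, hρ2⟩ := hρ
  have hv : 0 < 1 - ρ ^ 2 := by nlinarith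
  set σ := Real.sqrt (1 - ρ ^ 2) with hσdef
  have hσ : 0 < σ := Real.sqrt_pos.2 hv
  have hσ2 : 1 - ρ ^ 2 = σ ^ 2 := (Real.sq_sqrt hv.le).symm
  have hb : Tendsto (fun u => (-X u - ρ * -Y u) / σ) (𝓝[>] (0 : ℝ)) atTop := by
    refine Tendsto.atTop_div_const hσ ?_
    refine ((hX.const_mul_atTop (sub_pos.2 hρ2)).atTop_add (hd.const_mul ρ)).congr fun u => ?_
    ring
  have h := laplace_tail _ (fun u s => stdNormalCDF (α * (X u - σ * s) + β * Y u)) hb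
    (fun u => stdNormalCDF_mono.measurable.comp (by fun_prop))
    (fun _ _ => (stdNormalCDF_pos _).le) (fun _ _ => stdNormalCDF_le_one _) (by
      intro t _
      refine stdNormalCDF_tendsto.comp ?_
      refine ((hX.const_mul_atTop (neg_pos.2 hαβ)).atTop_add
        ((hd.const_mul β).sub ((hb.const_div_atTop t).const_mul (α * σ)))).congr fun u => ?_
      ring)
  have hden : Tendsto (fun u => stdNormalCDF (m * Y u)) (𝓝[>] (0 : ℝ)) (𝓝 1) := by
    refine stdNormalCDF_tendsto.comp ?_
    refine (hY.const_mul_atTop (neg_pos.2 hm)).congr fun u => ?_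
    ring
  have h2 := (h.div hden one_ne_zero).const_mul (Real.sqrt (2 * Real.pi))⁻¹
  rw [div_one, mul_one] at h2
  refine h2.congr fun u => ?_
  have e : (∫ z in Set.Iic (X u), (Real.sqrt (2 * Real.pi * (1 - ρ ^ 2)))⁻¹ *
        Real.exp (-(z - ρ * Y u) ^ 2 / (2 * (1 - ρ ^ 2))) *
        (stdNormalCDF (α * z + β * Y u) / stdNormalCDF (m * Y u))) =
      (Real.sqrt (2 * Real.pi))⁻¹ / stdNormalCDF (m * Y u) *
      ∫ s in Set.Ioi (0 : ℝ), Real.exp (-((-X u - ρ * -Y u) / σ + s) ^ 2 / 2) *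
        stdNormalCDF (α * (X u - σ * s) + β * Y u) := by
    rw [integral_Iic_subst _ _ hσ, ← integral_const_mul, ← integral_const_mul]
    congr 1
    ext s
    rw [Real.sqrt_mul (by positivity), ← hσdef, hσ2,
      show -((-X u - ρ * -Y u) / σ + s) ^ 2 / 2 =
        -(X u - σ * s - ρ * Y u) ^ 2 / (2 * σ ^ 2) by field_simp; ring]
    field_simp
  rw [e]
  simp only [Pi.div_apply]
  ring

/-- The analytic core: eliminating the quantiles `p`, `q` between the asymptotics of `P` in terms
of `p`, `q` and the equations `p * exp (p ^ 2 / 2) * u → 2 / √(2π)` defining them. -/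
lemma half_asymp (ρ : ℝ) (hρ : ρ ∈ Set.Ioo (-1 : ℝ) 1) (p q P : ℝ → ℝ)
    (hp : Tendsto p (𝓝[>] (0 : ℝ)) atTop) (hq : Tendsto q (𝓝[>] (0 : ℝ)) atTop)
    (h1 : Tendsto (fun u => p u * Real.exp (p u ^ 2 / 2) * u) (𝓝[>] (0 : ℝ))
      (𝓝 (2 * (Real.sqrt (2 * Real.pi))⁻¹)))
    (hsq : Tendsto (fun u => p u ^ 2 - q u ^ 2) (𝓝[>] (0 : ℝ)) (𝓝 0))
    (hP : Tendsto (fun u => (p u - ρ * q u) / Real.sqrt (1 - ρ ^ 2) *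
        Real.exp (((p u - ρ * q u) / Real.sqrt (1 - ρ ^ 2)) ^ 2 / 2) * P u)
      (𝓝[>] (0 : ℝ)) (𝓝 (Real.sqrt (2 * Real.pi))⁻¹)) :
    Tendsto (fun u => P u / (Real.sqrt ((1 + ρ) / (1 - ρ)) * Real.pi ^ (-(ρ / (1 + ρ))) *
        u ^ ((1 - ρ) / (1 + ρ)) * (-Real.log u) ^ (-(ρ / (1 + ρ)))))
      (𝓝[>] (0 : ℝ)) (𝓝 (1 / 2)) := by
  obtain ⟨hρ1, hρ2⟩ := hρ
  have hv : 0 < 1 - ρ ^ 2 := by nlinarith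
  set σ := Real.sqrt (1 - ρ ^ 2) with hσdef
  have hσ : 0 < σ := Real.sqrt_pos.2 hv
  have hσ2 : σ ^ 2 = 1 - ρ ^ 2 := Real.sq_sqrt hv.le
  have hcpos : 0 < 2 * (Real.sqrt (2 * Real.pi))⁻¹ := by positivity
  have hd := sub_tendsto p q hp hq hsq
  have hA : 0 < 1 + ρ := by linarith
  have hB : 0 < 1 - ρ := by linarith
  set b : ℝ → ℝ := fun u => (p u - ρ * q u) / σ with hbdef
  have hb : Tendsto b (𝓝[>] (0 : ℝ)) atTop := by
    refine Tendsto.atTop_div_const hσ ?_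
    refine ((hp.const_mul_atTop hB).atTop_add (hd.const_mul ρ)).congr fun u => ?_
    ring
  -- `(p - q) * p → 0`, since `(p - q) * (p + q)` and `(p - q) ^ 2` both do
  have hdp : Tendsto (fun u => (p u - q u) * p u) (𝓝[>] (0 : ℝ)) (𝓝 0) := by
    have := (hsq.add (hd.pow 2)).div_const 2
    norm_num at this
    refine this.congr fun u => ?_
    ring
  have hb2 : Tendsto (fun u => b u ^ 2 - (1 - ρ) / (1 + ρ) * p u ^ 2) (𝓝[>] (0 : ℝ)) (𝓝 0) := by
    have := ((hdp.const_mul (2 * (1 - ρ) * ρ)).add ((hd.pow 2).const_mul (ρ ^ 2))).div_const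
      (1 - ρ ^ 2)
    norm_num at this
    refine this.congr fun u => ?_
    simp only [hbdef]
    rw [div_pow, hσ2, show 1 - ρ ^ 2 = (1 - ρ) * (1 + ρ) by ring]
    field_simp
    ring
  have hlogb : Tendsto (fun u => Real.log (b u) - Real.log (p u)) (𝓝[>] (0 : ℝ))
      (𝓝 (Real.log ((1 - ρ) / σ))) := by
    have h3 : Tendsto (fun u => (1 - ρ) / σ + ρ / σ * ((p u - q u) / p u)) (𝓝[>] (0 : ℝ))
        (𝓝 ((1 - ρ) / σ)) := by
      simpa using ((hd.div_atTop hp).const_mul (ρ / σ)).const_add ((1 - ρ) / σ)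
    refine (h3.log (by positivity)).congr' ?_
    filter_upwards [hp.eventually_gt_atTop 0, hb.eventually_gt_atTop 0] with u hu hbu
    rw [← Real.log_div hbu.ne' hu.ne']
    congr 1
    simp only [hbdef]
    field_simp
    ring
  set T : ℝ → ℝ := fun u => Real.sqrt ((1 + ρ) / (1 - ρ)) * Real.pi ^ (-(ρ / (1 + ρ))) *
        u ^ ((1 - ρ) / (1 + ρ)) * (-Real.log u) ^ (-(ρ / (1 + ρ))) with hT
  have hTpos : ∀ᶠ u in 𝓝[>] (0 : ℝ), 0 < T u := by
    filter_upwards [Ioo_mem_nhdsGT one_pos] with u hu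
    have h4 := neg_pos.2 (Real.log_neg hu.1 hu.2)
    have h5 := hu.1
    positivity
  have hsqrt : Real.log (Real.sqrt ((1 + ρ) / (1 - ρ))) = -Real.log ((1 - ρ) / σ) := by
    rw [← Real.log_inv, inv_div, ← Real.sqrt_sq (by positivity : 0 ≤ σ / (1 - ρ)), div_pow, hσ2,
      show 1 - ρ ^ 2 = (1 - ρ) * (1 + ρ) by ring]
    congr 2
    field_simp
  have hlogc : Real.log (2 * (Real.sqrt (2 * Real.pi))⁻¹) =
      (Real.log 2 - Real.log Real.pi) / 2 := by
    rw [Real.log_mul two_ne_zero (by positivity), Real.log_inv, Real.log_sqrt (by positivity),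
      Real.log_mul two_ne_zero Real.pi_ne_zero]
    ring
  have hmain : Tendsto (fun u => Real.log (b u * Real.exp (b u ^ 2 / 2) * T u)) (𝓝[>] (0 : ℝ))
      (𝓝 (Real.log (2 * (Real.sqrt (2 * Real.pi))⁻¹))) := by
    have h6 := (((hlogb.add (hb2.div_const 2)).add
      ((log_quantile hcpos p hp h1).const_mul ((1 - ρ) / (1 + ρ)))).sub
      ((log_neg_log hcpos p hp h1).const_mul (ρ / (1 + ρ)))).add_const
      (-Real.log ((1 - ρ) / σ) - ρ / (1 + ρ) * Real.log Real.pi)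
    have h7 : Real.log ((1 - ρ) / σ) + 0 / 2 + (1 - ρ) / (1 + ρ) *
        Real.log (2 * (Real.sqrt (2 * Real.pi))⁻¹) - ρ / (1 + ρ) * -Real.log 2 +
        (-Real.log ((1 - ρ) / σ) - ρ / (1 + ρ) * Real.log Real.pi) =
        Real.log (2 * (Real.sqrt (2 * Real.pi))⁻¹) := by
      rw [hlogc]
      field_simp
      ring
    rw [h7] at h6
    refine h6.congr' ?_
    filter_upwards [hp.eventually_gt_atTop 0, hb.eventually_gt_atTop 0, hTpos,
      Ioo_mem_nhdsGT one_pos] with u hu hbu hTu hu1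
    have h4 := neg_pos.2 (Real.log_neg hu1.1 hu1.2)
    have h5 := hu1.1
    rw [Real.log_mul (by positivity) hTu.ne', Real.log_mul hbu.ne' (Real.exp_pos _).ne',
      Real.log_exp]
    simp only [hT]
    rw [Real.log_mul (by positivity) (by positivity), Real.log_mul (by positivity) (by positivity),
      Real.log_mul (by positivity) (by positivity), Real.log_rpow h4, Real.log_rpow h5,
      Real.log_rpow Real.pi_pos, hsqrt]
    field_simp
    ring
  have hmain2 : Tendsto (fun u => b u * Real.exp (b u ^ 2 / 2) * T u) (𝓝[>] (0 : ℝ))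
      (𝓝 (2 * (Real.sqrt (2 * Real.pi))⁻¹)) := by
    have := (Real.continuous_exp.tendsto _).comp hmain
    rw [Real.exp_log hcpos] at this
    refine this.congr' ?_
    filter_upwards [hb.eventually_gt_atTop 0, hTpos] with u hbu hTu
    exact Real.exp_log (by positivity)
  have hfin := hP.div hmain2 hcpos.ne'
  rw [show (Real.sqrt (2 * Real.pi))⁻¹ / (2 * (Real.sqrt (2 * Real.pi))⁻¹) = 1 / 2 by
    field_simp] at hfin
  refine hfin.congr' ?_
  filter_upwards [hb.eventually_gt_atTop 0, hTpos] with u hbu hTu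
  exact mul_div_mul_left _ _ (by positivity)

/-- Theorem 3, case 1 of the paper: if `λ₁ < 0` and `λ₂ < 0` then
`P₁(u) + P₂(u) ~ √((1+ρ)/(1-ρ))·π^{-ρ/(1+ρ)}·u^{(1-ρ)/(1+ρ)}·(-log u)^{-ρ/(1+ρ)}`
as `u → 0⁺`. -/
theorem copula_derivative_asymptotics_both_neg (ρ α₁ α₂ : ℝ)
    (hρ : ρ ∈ Set.Ioo (-1 : ℝ) 1) (hα₁ : α₁ ≠ 0) (hα₂ : α₂ ≠ 0) (l₁ l₂ : ℝ)
    (hl₁ : l₁ = (α₁ + ρ * α₂) / Real.sqrt (1 + α₂ ^ 2 * (1 - ρ ^ 2)))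
    (hl₂ : l₂ = (α₂ + ρ * α₁) / Real.sqrt (1 + α₁ ^ 2 * (1 - ρ ^ 2)))
    (hl₁neg : l₁ < 0) (hl₂neg : l₂ < 0)
    (Q₁ Q₂ : ℝ → ℝ)
    (hQ₁ : ∀ u ∈ Set.Ioo (0 : ℝ) 1, snCDF l₁ (Q₁ u) = u)
    (hQ₂ : ∀ u ∈ Set.Ioo (0 : ℝ) 1, snCDF l₂ (Q₂ u) = u) :
    Tendsto (fun u =>
      ((∫ z in Set.Iic (Q₁ u),
          (Real.sqrt (2 * Real.pi * (1 - ρ ^ 2)))⁻¹ *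
            Real.exp (-(z - ρ * Q₂ u) ^ 2 / (2 * (1 - ρ ^ 2))) *
            (stdNormalCDF (α₁ * z + α₂ * Q₂ u) / stdNormalCDF (l₂ * Q₂ u))) +
        (∫ z in Set.Iic (Q₂ u),
          (Real.sqrt (2 * Real.pi * (1 - ρ ^ 2)))⁻¹ *
            Real.exp (-(z - ρ * Q₁ u) ^ 2 / (2 * (1 - ρ ^ 2))) *
            (stdNormalCDF (α₂ * z + α₁ * Q₁ u) / stdNormalCDF (l₁ * Q₁ u)))) /
      (Real.sqrt ((1 + ρ) / (1 - ρ)) * Real.pi ^ (-(ρ / (1 + ρ))) *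
        u ^ ((1 - ρ) / (1 + ρ)) * (-Real.log u) ^ (-(ρ / (1 + ρ)))))
      (𝓝[>] (0 : ℝ)) (𝓝 1) := by
  have hα : α₁ + α₂ < 0 := by
    have h1 : α₁ + ρ * α₂ < 0 := by
      by_contra! h
      rw [hl₁] at hl₁neg
      exact absurd hl₁neg (not_lt.2 (by positivity))
    have h2 : α₂ + ρ * α₁ < 0 := by
      by_contra! h
      rw [hl₂] at hl₂neg
      exact absurd hl₂neg (not_lt.2 (by positivity))
    nlinarith [hρ.1]
  have hc : 0 < 2 * (Real.sqrt (2 * Real.pi))⁻¹ := by positivity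
  have t₁ := snQuantile_tendsto l₁ Q₁ hQ₁
  have t₂ := snQuantile_tendsto l₂ Q₂ hQ₂
  have a₁ := snQuantile_asymp l₁ hl₁neg Q₁ hQ₁
  have a₂ := snQuantile_asymp l₂ hl₂neg Q₂ hQ₂
  have s₁ := sq_sub_sq_tendsto hc _ _ t₁ t₂ a₁ a₂
  have s₂ := sq_sub_sq_tendsto hc _ _ t₂ t₁ a₂ a₁
  have r₁ := half_asymp ρ hρ _ _ _ t₁ t₂ a₁ s₁
    (condProb_asymp ρ α₁ α₂ l₂ hρ hα hl₂neg Q₁ Q₂ t₁ t₂ (sub_tendsto _ _ t₁ t₂ s₁))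
  have r₂ := half_asymp ρ hρ _ _ _ t₂ t₁ a₂ s₂
    (condProb_asymp ρ α₂ α₁ l₁ hρ (by linarith) hl₁neg Q₂ Q₁ t₂ t₁ (sub_tendsto _ _ t₂ t₁ s₂))
  have r := r₁.add r₂
  norm_num at r
  refine r.congr fun u => ?_
  exact (add_div _ _ _).symm
end

section
/- Let G₁, G₂, γ₁, K₂₁, K₂₂, K₂₃, C₁₁, C₁₂ be real constants with γ₁ > 0 and K₂₁ > 0, and let f₁, f₂ : (0,1) → ℝ satisfy, as u → 0⁺, f₂(u) = -K₂₁·√(-2 log u)·(1 + K₂₂·log(-log u)/log u + K₂₃/log u + ε₂(u)) and f₁(u)/f₂(u) = γ₁·(1 + C₁₁·log(-log u)/log u + C₁₂/log u + ε₁(u)) with ε₁(u), ε₂(u) = O((log(-log u)/log u)²). Set θ = K₂₁²·(G₁γ₁-G₂)², τ₁ = exp(2·(K₂₁²·K₂₃·(G₁γ₁-G₂)² + K₂₁²·C₁₂·G₁γ₁·(G₁γ₁-G₂))), and τ₂ = 2·(K₂₁²·K₂₂·(G₁γ₁-G₂)² + K₂₁²·C₁₁·G₁γ₁·(G₁γ₁-G₂)).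 Then, as u → 0⁺: (i) if G₁γ₁ ≠ G₂, |G₁·f₁(u) - G₂·f₂(u)| ~ |K₂₁·(G₁γ₁-G₂)|·√(-2 log u); and (ii) e^{-(G₁·f₁(u)-G₂·f₂(u))²/2} = τ₁·u^θ·(-log u)^{τ₂}·(1 + O((log(-log u))²/log u)). -/
open Real Filter Topology Asymptotics

/-!
With `s = log (-log u) / log u → 0`, the hypotheses read `f₂ = -K₂₁ √(-2 log u) (1 + a)` and
`f₁ = γ₁ f₂ (1 + b)`, where `a` and `b` are `O(s)` and are known up to `O(s²)`. Putting
`c = G₁γ₁ - G₂` and `d = G₁γ₁`,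
`G₁ f₁ - G₂ f₂ = -K₂₁ √(-2 log u) (1 + a) (c + d b)`,
and the first claim follows from `a, b → 0`. Squaring,
`-(G₁ f₁ - G₂ f₂)² / 2 = K₂₁² log u (c² + 2 c² a + 2 c d b + O(s²))`. The first term gives the power
of `u`; in the terms linear in `a` and `b`, the factor `log u` cancels against the denominators
of the expansions and leaves the power of `-log u` and the constant. The rest is
`δ = O(log u · s²) = O((log (-log u))² / log u)`, which tends to `0`, so `exp δ - 1 = O(δ)`.
-/

theorem tendsto_neg_log_nhdsGT_zero :
    Tendsto (fun u : ℝ => -Real.log u) (𝓝[>] (0 : ℝ)) atTop :=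
  tendsto_neg_atBot_atTop.comp Real.tendsto_log_nhdsGT_zero

theorem tendsto_loglog_nhdsGT_zero :
    Tendsto (fun u : ℝ => Real.log (-Real.log u)) (𝓝[>] (0 : ℝ)) atTop :=
  Real.tendsto_log_atTop.comp tendsto_neg_log_nhdsGT_zero

theorem tendsto_loglog_pow_div_log (n : ℕ) :
    Tendsto (fun u : ℝ => Real.log (-Real.log u) ^ n / Real.log u) (𝓝[>] (0 : ℝ)) (𝓝 0) := by
  have h := (isLittleO_pow_log_id_atTop (n := n)).tendsto_div_nhds_zero.comp
    tendsto_neg_log_nhdsGT_zero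
  simpa [Function.comp_def, div_neg] using h.neg

/-- A relative correction `p s + q / log u + ε` with `s = log (-log u) / log u` and `ε = O(s²)`
is `O(s)`, because `log (-log u)` tends to infinity and `s` to `0`. -/
theorem correction_isBigO (p q : ℝ) (ε : ℝ → ℝ)
    (hε : ε =O[𝓝[>] (0 : ℝ)] fun u => (Real.log (-Real.log u) / Real.log u) ^ 2) :
    (fun u => p * Real.log (-Real.log u) / Real.log u + q / Real.log u + ε u)
      =O[𝓝[>] (0 : ℝ)] fun u => Real.log (-Real.log u) / Real.log u := by
  have hs : Tendsto (fun u : ℝ => Real.log (-Real.log u) / Real.log u) (𝓝[>] (0 : ℝ)) (𝓝 0) := by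
    simpa using tendsto_loglog_pow_div_log 1
  have h1 : (fun u : ℝ => p * Real.log (-Real.log u) / Real.log u)
      =O[𝓝[>] (0 : ℝ)] fun u => Real.log (-Real.log u) / Real.log u := by
    simpa only [mul_div_assoc] using (isBigO_refl _ _).const_mul_left p
  have h2 : (fun u : ℝ => q / Real.log u)
      =O[𝓝[>] (0 : ℝ)] fun u => Real.log (-Real.log u) / Real.log u := by
    have hq : (fun _ : ℝ => q) =O[𝓝[>] (0 : ℝ)] fun u => Real.log (-Real.log u) :=
      (isLittleO_const_left.2 (Or.inr
        (tendsto_norm_atTop_atTop.comp tendsto_loglog_nhdsGT_zero))).isBigO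
    simpa only [div_eq_mul_inv] using hq.mul (isBigO_refl (fun u => (Real.log u)⁻¹) _)
  have h3 : (fun u : ℝ => (Real.log (-Real.log u) / Real.log u) ^ 2)
      =O[𝓝[>] (0 : ℝ)] fun u => Real.log (-Real.log u) / Real.log u := by
    simpa [sq] using (hs.isBigO_one ℝ).mul
      (isBigO_refl (fun u : ℝ => Real.log (-Real.log u) / Real.log u) _)
  exact (h1.add h2).add (hε.trans h3)

/-- The remainder of `(1 + a)² (c + d b)²` beyond first order in `a` and `b` is of second
order. -/
theorem second_order_remainder_isBigO {l : Filter ℝ} {a b s : ℝ → ℝ} (c d : ℝ)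
    (ha : a =O[l] s) (hb : b =O[l] s) (hb0 : Tendsto b l (𝓝 0)) :
    (fun u => (1 + a u) ^ 2 * (c + d * b u) ^ 2 - c ^ 2 - 2 * c ^ 2 * a u - 2 * c * d * b u)
      =O[l] fun u => s u ^ 2 := by
  have k1 : (fun u => (c + d * b u) ^ 2) =O[l] fun _ => (1 : ℝ) :=
    ((tendsto_const_nhds.add (hb0.const_mul d)).pow 2).isBigO_one ℝ
  have k2 : (fun u => 4 * c * d + 2 * d ^ 2 * b u) =O[l] fun _ => (1 : ℝ) :=
    (tendsto_const_nhds.add (hb0.const_mul (2 * d ^ 2))).isBigO_one ℝ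
  have h1 := (ha.pow 2).mul k1
  have h2 := (ha.mul hb).mul k2
  have h3 := (hb.pow 2).const_mul_left (d ^ 2)
  simp only [mul_one, ← sq] at h1 h2
  refine ((h1.add h2).add h3).congr_left fun u => ?_
  ring

/-- Lemma 6 of the paper: asymptotic form of `|G₁f₁(u) - G₂f₂(u)|` and of
`e^{-(G₁f₁(u)-G₂f₂(u))²/2}` as `u → 0⁺`, given the quantile-type expansions
of `f₁` and `f₂`. -/
theorem general_exponential_asymptotics
    (G₁ G₂ γ₁ K₂₁ K₂₂ K₂₃ C₁₁ C₁₂ : ℝ) (hγ₁ : 0 < γ₁) (hK : 0 < K₂₁)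
    (f₁ f₂ ε₁ ε₂ : ℝ → ℝ)
    (hf₂ : ∀ᶠ u in 𝓝[>] (0 : ℝ), f₂ u =
      -K₂₁ * Real.sqrt (-2 * Real.log u) *
        (1 + K₂₂ * Real.log (-Real.log u) / Real.log u + K₂₃ / Real.log u + ε₂ u))
    (hf₁ : ∀ᶠ u in 𝓝[>] (0 : ℝ), f₁ u / f₂ u =
      γ₁ * (1 + C₁₁ * Real.log (-Real.log u) / Real.log u + C₁₂ / Real.log u + ε₁ u))
    (hε₁ : ε₁ =O[𝓝[>] (0 : ℝ)] fun u => (Real.log (-Real.log u) / Real.log u) ^ 2)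
    (hε₂ : ε₂ =O[𝓝[>] (0 : ℝ)] fun u => (Real.log (-Real.log u) / Real.log u) ^ 2) :
    (G₁ * γ₁ ≠ G₂ →
      Tendsto (fun u => |G₁ * f₁ u - G₂ * f₂ u| /
          (|K₂₁ * (G₁ * γ₁ - G₂)| * Real.sqrt (-2 * Real.log u)))
        (𝓝[>] (0 : ℝ)) (𝓝 1)) ∧
    ∃ E : ℝ → ℝ,
      (∀ᶠ u in 𝓝[>] (0 : ℝ),
        Real.exp (-(G₁ * f₁ u - G₂ * f₂ u) ^ 2 / 2) =
          Real.exp (2 * (K₂₁ ^ 2 * K₂₃ * (G₁ * γ₁ - G₂) ^ 2 +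
              K₂₁ ^ 2 * C₁₂ * G₁ * γ₁ * (G₁ * γ₁ - G₂))) *
            u ^ (K₂₁ ^ 2 * (G₁ * γ₁ - G₂) ^ 2) *
            (-Real.log u) ^ (2 * (K₂₁ ^ 2 * K₂₂ * (G₁ * γ₁ - G₂) ^ 2 +
              K₂₁ ^ 2 * C₁₁ * G₁ * γ₁ * (G₁ * γ₁ - G₂))) *
            (1 + E u)) ∧
      E =O[𝓝[>] (0 : ℝ)] fun u => (Real.log (-Real.log u)) ^ 2 / Real.log u := by
  have hs : Tendsto (fun u : ℝ => Real.log (-Real.log u) / Real.log u) (𝓝[>] (0 : ℝ)) (𝓝 0) := by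
    simpa using tendsto_loglog_pow_div_log 1
  have ha := correction_isBigO K₂₂ K₂₃ ε₂ hε₂
  have hb := correction_isBigO C₁₁ C₁₂ ε₁ hε₁
  set a : ℝ → ℝ := fun u =>
    K₂₂ * Real.log (-Real.log u) / Real.log u + K₂₃ / Real.log u + ε₂ u with a_def
  set b : ℝ → ℝ := fun u =>
    C₁₁ * Real.log (-Real.log u) / Real.log u + C₁₂ / Real.log u + ε₁ u with b_def
  set c : ℝ := G₁ * γ₁ - G₂ with c_def
  have ha0 : Tendsto a (𝓝[>] (0 : ℝ)) (𝓝 0) := ha.trans_tendsto hs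
  have hb0 : Tendsto b (𝓝[>] (0 : ℝ)) (𝓝 0) := hb.trans_tendsto hs
  have hL : ∀ᶠ u in 𝓝[>] (0 : ℝ), 0 < -Real.log u :=
    tendsto_neg_log_nhdsGT_zero.eventually_gt_atTop 0
  have hu : ∀ᶠ u in 𝓝[>] (0 : ℝ), 0 < u := self_mem_nhdsWithin
  have ha1 : ∀ᶠ u in 𝓝[>] (0 : ℝ), -1 < a u := ha0.eventually_const_lt (by norm_num)
  have hD : ∀ᶠ u in 𝓝[>] (0 : ℝ), G₁ * f₁ u - G₂ * f₂ u =
      -K₂₁ * Real.sqrt (-2 * Real.log u) * ((1 + a u) * (c + G₁ * γ₁ * b u)) := by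
    filter_upwards [hf₁, hf₂, hL, ha1] with u h1 h2 hLu hau
    have hsq : 0 < Real.sqrt (-2 * Real.log u) := Real.sqrt_pos.2 (by linarith)
    have h2' : f₂ u = -K₂₁ * Real.sqrt (-2 * Real.log u) * (1 + a u) := by
      rw [h2, a_def]; ring
    -- Since `x / 0 = 0`, `f₂ u ≠ 0` is needed to recover `f₁` from the quotient `f₁ / f₂`.
    have hne : f₂ u ≠ 0 := by
      rw [h2']
      exact mul_ne_zero (mul_ne_zero (neg_ne_zero.2 hK.ne') hsq.ne') (by linarith)
    have h1' : f₁ u = γ₁ * (1 + b u) * f₂ u := by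
      rw [div_eq_iff hne] at h1
      rw [h1, b_def]; ring
    rw [h1', h2', c_def]; ring
  refine ⟨fun hG => ?_, ?_⟩
  · have hc : c ≠ 0 := sub_ne_zero.2 hG
    have hlim : Tendsto (fun u => |(1 + a u) * (c + G₁ * γ₁ * b u)| / |c|)
        (𝓝[>] (0 : ℝ)) (𝓝 1) := by
      have h := (((ha0.const_add 1).mul
        ((hb0.const_mul (G₁ * γ₁)).const_add c)).abs).div_const |c|
      simpa [hc] using h
    refine hlim.congr' ?_
    filter_upwards [hD, hL] with u hDu hLu
    have hsq : 0 < Real.sqrt (-2 * Real.log u) := Real.sqrt_pos.2 (by linarith)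
    rw [hDu, abs_mul (-K₂₁ * _), abs_mul (-K₂₁), abs_neg, abs_mul K₂₁, abs_of_pos hsq]
    have := abs_pos.2 hc
    have := abs_pos.2 hK.ne'
    generalize Real.sqrt (-2 * Real.log u) = t at hsq ⊢
    field_simp
  · set d : ℝ := G₁ * γ₁ with d_def
    let r : ℝ → ℝ := fun u =>
      (1 + a u) ^ 2 * (c + d * b u) ^ 2 - c ^ 2 - 2 * c ^ 2 * a u - 2 * c * d * b u
    let δ : ℝ → ℝ := fun u =>
      K₂₁ ^ 2 * (Real.log u * (2 * c ^ 2 * ε₂ u + 2 * c * d * ε₁ u + r u))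
    have hδ : δ =O[𝓝[>] (0 : ℝ)] fun u => Real.log (-Real.log u) ^ 2 / Real.log u := by
      have hr : r =O[𝓝[>] (0 : ℝ)] fun u => (Real.log (-Real.log u) / Real.log u) ^ 2 :=
        second_order_remainder_isBigO c d ha hb hb0
      have h := (((isBigO_refl Real.log (𝓝[>] (0 : ℝ))).mul
        (((hε₂.const_mul_left (2 * c ^ 2)).add (hε₁.const_mul_left (2 * c * d))).add
          hr)).const_mul_left (K₂₁ ^ 2))
      refine h.congr' EventuallyEq.rfl ?_
      filter_upwards [hL] with u hLu
      have : Real.log u ≠ 0 := by linarith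
      field_simp
    have hδ0 : Tendsto δ (𝓝[>] (0 : ℝ)) (𝓝 0) :=
      hδ.trans_tendsto (tendsto_loglog_pow_div_log 2)
    refine ⟨fun u => Real.exp (δ u) - 1, ?_, ?_⟩
    · filter_upwards [hD, hL, hu] with u hDu hLu hu0
      have hlog : Real.log u ≠ 0 := by linarith
      have hsq : Real.sqrt (-2 * Real.log u) ^ 2 = -2 * Real.log u :=
        Real.sq_sqrt (by linarith)
      rw [hDu, Real.rpow_def_of_pos hu0, Real.rpow_def_of_pos hLu, add_sub_cancel,
        ← Real.exp_add, ← Real.exp_add, ← Real.exp_add]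
      congr 1
      have haL : Real.log u * a u =
          K₂₂ * Real.log (-Real.log u) + K₂₃ + Real.log u * ε₂ u := by
        simp only [a_def]; field_simp
      have hbL : Real.log u * b u =
          C₁₁ * Real.log (-Real.log u) + C₁₂ + Real.log u * ε₁ u := by
        simp only [b_def]; field_simp
      have hK₁ : K₂₁ ^ 2 * C₁₂ * G₁ * γ₁ * c = K₂₁ ^ 2 * C₁₂ * d * c := by rw [d_def]; ring
      have hK₂ : K₂₁ ^ 2 * C₁₁ * G₁ * γ₁ * c = K₂₁ ^ 2 * C₁₁ * d * c := by rw [d_def]; ring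
      rw [hK₁, hK₂]
      simp only [δ, r]
      generalize a u = A at *
      generalize b u = B at *
      linear_combination (-(K₂₁ ^ 2 * ((1 + A) * (c + d * B)) ^ 2) / 2) * hsq
        + 2 * K₂₁ ^ 2 * c ^ 2 * haL + 2 * K₂₁ ^ 2 * c * d * hbL
    · have hexp : (fun x : ℝ => Real.exp x - 1) =O[𝓝 0] fun x => x := by
        simpa using (Real.hasDerivAt_exp 0).differentiableAt.isBigO_sub
      exact (hexp.comp_tendsto hδ0).trans hδ
end

section
/- Let ρ ∈ (-1,1) and α₁, α₂ ∈ ℝ satisfy α₁ + ρα₂ > 0 and α₂ + ρα₁ > 0. Then α₁·√(1+α₂²(1-ρ²)) + α₂·√(1+α₁²(1-ρ²)) > 0. -/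
/-!
Adding the two hypotheses gives `(1 + ρ) (α₁ + α₂) > 0`, hence `α₁ + α₂ > 0`. With `c = 1 - ρ² ≥ 0`,
the claim is then clear if both `αᵢ` are nonnegative. If, say, `α₂ < 0`, then `α₁ > -α₂ > 0`, and the
inequality `-α₂ √(1 + c α₁²) < α₁ √(1 + c α₂²)` between nonnegative numbers holds because the
squares differ by exactly `α₁² - α₂² > 0`.
-/

open Real

/-- The case of a negative second coefficient; the case of a negative first one follows by
symmetry. -/
lemma combination_pos_of_neg {a b c : ℝ} (hc : 0 ≤ c) (hab : 0 < a + b) (hb : b < 0) :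
    0 < a * √(1 + b ^ 2 * c) + b * √(1 + a ^ 2 * c) := by
  have key : -b * √(1 + a ^ 2 * c) < a * √(1 + b ^ 2 * c) := by
    apply lt_of_pow_lt_pow_left₀ 2 (mul_nonneg (by linarith) (sqrt_nonneg _))
    rw [mul_pow, mul_pow, sq_sqrt (by positivity), sq_sqrt (by positivity)]
    nlinarith
  linarith

/-- If `α₁ + ρα₂ > 0` and `α₂ + ρα₁ > 0` (i.e. `λ₁ > 0` and `λ₂ > 0`), then
`α₁·√(1+α₂²(1-ρ²)) + α₂·√(1+α₁²(1-ρ²)) > 0`. -/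
theorem alpha_gamma_combination_pos (ρ α₁ α₂ : ℝ)
    (hρ : ρ ∈ Set.Ioo (-1 : ℝ) 1)
    (h₁ : 0 < α₁ + ρ * α₂) (h₂ : 0 < α₂ + ρ * α₁) :
    0 < α₁ * Real.sqrt (1 + α₂ ^ 2 * (1 - ρ ^ 2)) +
        α₂ * Real.sqrt (1 + α₁ ^ 2 * (1 - ρ ^ 2)) := by
  obtain ⟨hl, hr⟩ := hρ
  have hc : 0 ≤ 1 - ρ ^ 2 := by nlinarith
  have hsum : 0 < α₁ + α₂ :=
    pos_of_mul_pos_right (a := 1 + ρ) (by linarith) (by linarith)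
  rcases lt_or_ge α₂ 0 with hb | hb
  · exact combination_pos_of_neg hc hsum hb
  rcases lt_or_ge α₁ 0 with ha | ha
  · rw [add_comm]
    exact combination_pos_of_neg hc (by linarith) ha
  have hs₁ : 0 < √(1 + α₂ ^ 2 * (1 - ρ ^ 2)) := sqrt_pos.2 (by positivity)
  have hs₂ : 0 < √(1 + α₁ ^ 2 * (1 - ρ ^ 2)) := sqrt_pos.2 (by positivity)
  rcases ha.lt_or_eq with ha' | rfl
  · exact add_pos_of_pos_of_nonneg (mul_pos ha' hs₁) (mul_nonneg hb hs₂.le)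
  · exact add_pos_of_nonneg_of_pos (mul_nonneg ha hs₁.le) (mul_pos (by linarith) hs₂)
end
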